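/- arXiv:1502.05332 — 2 statements merged into one kernel-verified Lean document; each statement's English description precedes it below -/
import Mathlib

section
/- Let S be a set of 2k points in the plane in general position such that at least two points of S lie in the interior of the convex hull of S. Then S has a non-crossing perfect matching with the piercing property. -/
open scoped Classical

/-- Points in the plane. -/
abbrev Pt : Type := ℝ × ℝ

/-- A finite planar point set is in *general position* if no three of its
points are collinear. -/
def GeneralPosition (S : Finset Pt) : Prop :=
  ∀ p ∈ S, ∀ q ∈ S, ∀ r ∈ S, p ≠ q → p ≠ r → q ≠ r →
    ¬ Collinear ℝ ({p, q, r} : Set Pt)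

/-- The closed straight-line segment spanned by an unordered pair of points. -/
noncomputable def seg : Sym2 Pt → Set Pt :=
  Sym2.lift ⟨fun a b => segment ℝ a b, fun a b => segment_symm ℝ a b⟩

/-- `M` is a non-crossing perfect matching of `S`: a partition of `S` into
unordered pairs (of distinct points) whose closed segments are pairwise disjoint. -/
def IsNCMatching (S : Finset Pt) (M : Finset (Sym2 Pt)) : Prop :=
  (∀ e ∈ M, ¬ e.IsDiag) ∧
  (∀ e ∈ M, ∀ p, p ∈ e → p ∈ S) ∧
  (∀ p ∈ S, ∃! e, e ∈ M ∧ p ∈ e) ∧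
  (∀ e ∈ M, ∀ f ∈ M, e ≠ f → Disjoint (seg e) (seg f))

/-- The number of non-crossing perfect matchings of `S`. -/
noncomputable def pm (S : Finset Pt) : ℕ :=
  Set.ncard {M : Finset (Sym2 Pt) | IsNCMatching S M}

/-- `S` is in convex position: no point of `S` lies in the convex hull of the
other points. -/
def ConvexPosition (S : Finset Pt) : Prop :=
  ∀ p ∈ S, p ∉ convexHull ℝ (↑(S.erase p) : Set Pt)

/-- The signed side of `X` with respect to the directed line from `Q` to `P`.
The two open half-planes bounded by the line through `Q` and `P` are
`{X | 0 < sideOf Q P X}` and `{X | sideOf Q P X < 0}`. -/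
def sideOf (Q P X : Pt) : ℝ :=
  (P.1 - Q.1) * (X.2 - Q.2) - (P.2 - Q.2) * (X.1 - Q.1)

/-- Segment `AB` pierces segment `CD`: the closed segments are disjoint, but the
affine line through `A` and `B` meets the closed segment `CD`. -/
def Pierces (A B C D : Pt) : Prop :=
  Disjoint (segment ℝ A B) (segment ℝ C D) ∧
  ((affineSpan ℝ ({A, B} : Set Pt) : Set Pt) ∩ segment ℝ C D).Nonempty

/-- The matching `M` of `S` has the *piercing property*: it contains pairs
`{A,B}` and `{C,D}` with `A` on the boundary of the convex hull of `S`
and `AB` piercing `CD`. -/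
def HasPiercing (S : Finset Pt) (M : Finset (Sym2 Pt)) : Prop :=
  ∃ A B C D : Pt, s(A, B) ∈ M ∧ s(C, D) ∈ M ∧
    A ∈ frontier (convexHull ℝ (S : Set Pt)) ∧ Pierces A B C D

/-- The exceptional order type with interior point `Q`: `Q` is the unique point
of `S` interior to the convex hull of `S`, and for every other point `P` of `S`
each open half-plane bounded by the line through `Q` and `P` contains exactly
two points of `S`. -/
def ExceptionalAt (S : Finset Pt) (Q : Pt) : Prop :=
  (↑S ∩ interior (convexHull ℝ (S : Set Pt))) = {Q} ∧
  ∀ P ∈ S, P ≠ Q →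
    (S.filter (fun X => 0 < sideOf Q P X)).card = 2 ∧
    (S.filter (fun X => sideOf Q P X < 0)).card = 2

/-- The exceptional order type of Figure 1. -/
def Exceptional (S : Finset Pt) : Prop :=
  ∃ Q ∈ S, ExceptionalAt S Q

/-! Order the points around a hull vertex `A`. If the line from `A` through `B ∈ S` leaves the hull
through an edge `CD` and an odd number of points lie on one side of it, then both sides become even
once `C` and `D` are removed; matching `AB`, `CD` and each side separately gives a matching in which
`AB` pierces `CD`. If the two sides are even, the same works after removing two such edges in
succession.

So suppose that `S` has no piercing matching. The odd case shows that the triangle spanned by three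
consecutive hull vertices contains no point of `S`, which excludes triangles and quadrilaterals as
hulls, and that a pentagonal hull has at most one interior point. The even case shows that if `AB`
leaves the hull through the edge `p₁p₂`, then `B` lies to the right of `p₀p₃`, where
`p₀, p₁, p₂, p₃` are consecutive on the hull. The line `p₀B` then leaves through `p₂p₃`, and by
induction `B` lies to the right of every `pᵢpᵢ₊₃`. With at least six hull vertices it cannot lie
to the right of both `p₀p₃` and `p₃p₆`. -/

/-! ### Orientation of triples -/

lemma sideOf_self_left (P Q : Pt) : sideOf P Q P = 0 := by
  simp [sideOf]

lemma sideOf_self_right (P Q : Pt) : sideOf P Q Q = 0 := by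
  rw [sideOf]; ring

lemma sideOf_swap (P Q X : Pt) : sideOf Q P X = -sideOf P Q X := by
  simp only [sideOf]; ring

lemma sideOf_rotate (P Q X : Pt) : sideOf Q X P = sideOf P Q X := by
  simp only [sideOf]; ring

lemma sideOf_swap_right (P Q X : Pt) : sideOf P X Q = -sideOf P Q X := by
  simp only [sideOf]; ring

lemma sideOf_combo (P Q X Y : Pt) {a b : ℝ} (hab : a + b = 1) :
    sideOf P Q (a • X + b • Y) = a * sideOf P Q X + b * sideOf P Q Y := by
  obtain rfl : b = 1 - a := by linarith
  simp only [sideOf, Prod.fst_add, Prod.snd_add, Prod.smul_fst, Prod.smul_snd, smul_eq_mul]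
  ring

-- The barycentric coordinates of `B` in the triangle `XYZ` are ratios of signed areas.
lemma sideOf_mul_sideOf (P Q X Y Z B : Pt) :
    sideOf P Q B * sideOf X Y Z =
      sideOf P Q X * sideOf B Y Z + sideOf P Q Y * sideOf X B Z + sideOf P Q Z * sideOf X Y B := by
  simp only [sideOf]; ring

lemma ne_of_sideOf_ne_zero {A B C : Pt} (h : sideOf A B C ≠ 0) : C ≠ A ∧ C ≠ B ∧ A ≠ B := by
  refine ⟨?_, ?_, ?_⟩ <;> rintro rfl <;> apply h <;> simp only [sideOf] <;> ring

lemma ne_of_sideOf_pos_of_sideOf_pos {P Q R B : Pt} (hPQ : 0 < sideOf P Q B)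
    (hQR : 0 < sideOf Q R B) : P ≠ R := by
  rintro rfl
  rw [sideOf_swap] at hQR
  linarith

lemma sideOf_trans {U V O X Y Z : Pt} (hO : sideOf U V O = 0) (hX : 0 < sideOf U V X)
    (hY : 0 < sideOf U V Y) (hZ : 0 < sideOf U V Z) (hXY : 0 < sideOf O X Y)
    (hYZ : 0 < sideOf O Y Z) : 0 < sideOf O X Z := by
  have hbary := sideOf_mul_sideOf U V X Y Z O
  rw [hO, sideOf_swap O X Z, sideOf_rotate O X Y] at hbary
  have : 0 < sideOf U V Y * sideOf O X Z := by
    linarith [mul_pos hX hYZ, mul_pos hZ hXY]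
  exact pos_of_mul_pos_right this hY.le

lemma sideOf_pos_of_mem_triangle {C D A P R B : Pt} (hA : 0 < sideOf C D A)
    (hP : 0 ≤ sideOf C D P) (hR : 0 ≤ sideOf C D R) (hPR : 0 < sideOf P R B)
    (hAP : sideOf A B P ≤ 0) (hAR : 0 ≤ sideOf A B R) : 0 < sideOf C D B := by
  have hAPB : 0 ≤ sideOf A P B := by
    rw [sideOf_swap_right]
    linarith
  have harea : sideOf A P R = sideOf P R B + sideOf A B R + sideOf A P B := by
    simp only [sideOf]; ring
  have hbary := sideOf_mul_sideOf C D A P R B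
  rw [← sideOf_rotate B P R] at hbary
  have hprod : 0 < sideOf C D B * sideOf A P R := by
    linarith [mul_pos hA hPR, mul_nonneg hP hAR, mul_nonneg hR hAPB]
  exact pos_of_mul_pos_left hprod (by linarith)

lemma sq_sub_add_sq_sub_pos {P Q : Pt} (h : P ≠ Q) :
    0 < (Q.1 - P.1) ^ 2 + (Q.2 - P.2) ^ 2 := by
  rcases not_and_or.1 (Prod.ext_iff.not.1 h) with h | h
  all_goals
    have := sub_ne_zero.2 (Ne.symm h)
    positivity

lemma convex_sideOf_preimage (P Q : Pt) {s : Set ℝ} (hs : Convex ℝ s) :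
    Convex ℝ (sideOf P Q ⁻¹' s) := by
  intro X hX Y hY a b ha hb hab
  rw [Set.mem_preimage, sideOf_combo P Q X Y hab]
  exact hs hX hY ha hb hab

lemma disjoint_convexHull_of_sideOf {s t : Set Pt} {P Q : Pt} (hs : ∀ X ∈ s, sideOf P Q X ≤ 0)
    (ht : ∀ X ∈ t, 0 < sideOf P Q X) : Disjoint (convexHull ℝ s) (convexHull ℝ t) :=
  ((Set.Iic_disjoint_Ioi le_rfl).preimage (sideOf P Q)).mono
    (convexHull_min hs (convex_sideOf_preimage P Q (convex_Iic 0)))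
    (convexHull_min ht (convex_sideOf_preimage P Q (convex_Ioi 0)))

lemma exists_sideOf_lt_of_mem_interior_convexHull {s : Set Pt} {B P Q : Pt}
    (hB : B ∈ interior (convexHull ℝ s)) (hPQ : P ≠ Q) :
    ∃ X ∈ s, sideOf P Q X < sideOf P Q B := by
  by_contra! hmin
  have hhull : convexHull ℝ s ⊆ sideOf P Q ⁻¹' Set.Ici (sideOf P Q B) :=
    convexHull_min hmin (convex_sideOf_preimage P Q (convex_Ici _))
  let shift : ℝ → Pt := fun ε => (B.1 + ε * (Q.2 - P.2), B.2 - ε * (Q.1 - P.1))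
  have hshift : Continuous shift := by fun_prop
  have hnear : ∀ᶠ ε in nhds 0, shift ε ∈ interior (convexHull ℝ s) :=
    hshift.continuousAt.eventually_mem (isOpen_interior.mem_nhds (by simpa [shift] using hB))
  obtain ⟨ε, hε, hεpos⟩ :=
    ((hnear.filter_mono nhdsWithin_le_nhds).and (self_mem_nhdsWithin (s := Set.Ioi (0 : ℝ)))).exists
  have hdrop : sideOf P Q (shift ε) =
      sideOf P Q B - ε * ((Q.1 - P.1) ^ 2 + (Q.2 - P.2) ^ 2) := by
    simp only [shift, sideOf]; ring
  have hle : sideOf P Q B ≤ sideOf P Q (shift ε) := hhull (interior_subset hε)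
  linarith [mul_pos (Set.mem_Ioi.1 hεpos) (sq_sub_add_sq_sub_pos hPQ)]

lemma collinear_of_sideOf_eq_zero {P Q X : Pt} (hPQ : P ≠ Q) (h : sideOf P Q X = 0) :
    Collinear ℝ {P, Q, X} := by
  have hpos := sq_sub_add_sq_sub_pos hPQ
  rw [sideOf] at h
  rw [collinear_iff_of_mem (p₀ := P) (by simp)]
  refine ⟨Q - P, ?_⟩
  rintro Y (rfl | rfl | rfl)
  · exact ⟨0, by simp⟩
  · exact ⟨1, by simp⟩
  · refine ⟨((Q.1 - P.1) * (Y.1 - P.1) + (Q.2 - P.2) * (Y.2 - P.2)) /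
      ((Q.1 - P.1) ^ 2 + (Q.2 - P.2) ^ 2), Prod.ext ?_ ?_⟩
    · simp only [vadd_eq_add, Prod.fst_add, Prod.smul_fst, Prod.fst_sub, smul_eq_mul]
      field_simp
      linear_combination -(Q.2 - P.2) * h
    · simp only [vadd_eq_add, Prod.snd_add, Prod.smul_snd, Prod.snd_sub, smul_eq_mul]
      field_simp
      linear_combination (Q.1 - P.1) * h

namespace GeneralPosition

variable {S T : Finset Pt}

lemma mono (hS : GeneralPosition S) (hTS : T ⊆ S) : GeneralPosition T :=
  fun p hp q hq r hr => hS p (hTS hp) q (hTS hq) r (hTS hr)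

lemma sideOf_ne_zero (hS : GeneralPosition S) {P Q X : Pt} (hP : P ∈ S) (hQ : Q ∈ S) (hX : X ∈ S)
    (hPQ : P ≠ Q) (hPX : P ≠ X) (hQX : Q ≠ X) : sideOf P Q X ≠ 0 :=
  fun h => hS P hP Q hQ X hX hPQ hPX hQX (collinear_of_sideOf_eq_zero hPQ h)

end GeneralPosition

/-! ### Angular order around a point -/

lemma exists_forall_rel_of_trans {α : Type*} {r : α → α → Prop} {T : Finset α} (hT : T.Nonempty)
    (htrans : ∀ x ∈ T, ∀ y ∈ T, ∀ z ∈ T, r x y → r y z → r x z)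
    (htotal : ∀ x ∈ T, ∀ y ∈ T, x ≠ y → r x y ∨ r y x) :
    ∃ x ∈ T, ∀ y ∈ T, y ≠ x → r x y := by
  induction hT using Finset.Nonempty.cons_induction with
  | singleton a => exact ⟨a, by simp⟩
  | cons a T ha _ ih =>
    simp only [Finset.forall_mem_cons] at htrans htotal
    obtain ⟨x, hx, hmin⟩ := ih (fun x hx y hy z hz => (htrans.2 x hx).2 y hy |>.2 z hz)
      (fun x hx y hy => (htotal.2 x hx).2 y hy)
    have hax : a ≠ x := fun h => ha (h ▸ hx)
    rcases htotal.1.2 x hx hax with h | h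
    · refine ⟨a, by simp, ?_⟩
      simp only [Finset.forall_mem_cons]
      refine ⟨fun h => (h rfl).elim, fun y hy _ => ?_⟩
      rcases eq_or_ne y x with rfl | hyx
      · exact h
      · exact (htrans.1.2 x hx).2 y hy h (hmin y hy hyx)
    · refine ⟨x, by simp [hx], ?_⟩
      simp only [Finset.forall_mem_cons]
      exact ⟨fun _ => h, hmin⟩

section AngularOrder

variable {S T : Finset Pt} {U V O : Pt}

lemma GeneralPosition.sideOf_total (hS : GeneralPosition S) (hO : O ∈ S) (hTS : T ⊆ S)
    (hUV : sideOf U V O = 0) (hpos : ∀ X ∈ T, 0 < sideOf U V X) {X Y : Pt} (hX : X ∈ T)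
    (hY : Y ∈ T) (hXY : X ≠ Y) : 0 < sideOf O X Y ∨ 0 < sideOf O Y X := by
  have hne : ∀ Z ∈ T, O ≠ Z := by
    rintro Z hZ rfl
    exact (hpos _ hZ).ne' hUV
  rw [sideOf_swap_right O X Y, neg_pos]
  exact (hS.sideOf_ne_zero hO (hTS hX) (hTS hY) (hne X hX) (hne Y hY) hXY).symm.lt_or_gt

lemma GeneralPosition.exists_angularly_first (hS : GeneralPosition S) (hO : O ∈ S) (hTS : T ⊆ S)
    (hUV : sideOf U V O = 0) (hpos : ∀ X ∈ T, 0 < sideOf U V X) (hT : T.Nonempty) :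
    ∃ X ∈ T, ∀ Y ∈ T, Y ≠ X → 0 < sideOf O X Y :=
  exists_forall_rel_of_trans hT
    (fun X hX Y hY Z hZ => sideOf_trans hUV (hpos X hX) (hpos Y hY) (hpos Z hZ))
    (fun _ hX _ hY hXY => hS.sideOf_total hO hTS hUV hpos hX hY hXY)

lemma GeneralPosition.exists_angularly_last (hS : GeneralPosition S) (hO : O ∈ S) (hTS : T ⊆ S)
    (hUV : sideOf U V O = 0) (hpos : ∀ X ∈ T, 0 < sideOf U V X) (hT : T.Nonempty) :
    ∃ X ∈ T, ∀ Y ∈ T, Y ≠ X → 0 < sideOf O Y X :=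
  exists_forall_rel_of_trans (r := fun X Y => 0 < sideOf O Y X) hT
    (fun X hX Y hY Z hZ hXY hYZ =>
      sideOf_trans hUV (hpos Z hZ) (hpos Y hY) (hpos X hX) hYZ hXY)
    (fun _ hX _ hY hXY => (hS.sideOf_total hO hTS hUV hpos hX hY hXY).symm)

lemma GeneralPosition.exists_angularly_first_second (hS : GeneralPosition S) (hO : O ∈ S)
    (hTS : T ⊆ S) (hUV : sideOf U V O = 0) (hpos : ∀ X ∈ T, 0 < sideOf U V X)
    (hT : T.Nontrivial) :
    ∃ X ∈ T, ∃ Y ∈ T, 0 < sideOf O X Y ∧ ∀ Z ∈ T, Z ≠ X → Z ≠ Y → 0 < sideOf O Y Z := by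
  obtain ⟨X, hX, hfirst⟩ := hS.exists_angularly_first hO hTS hUV hpos hT.nonempty
  obtain ⟨Y, hY, hsecond⟩ := hS.exists_angularly_first hO ((T.erase_subset X).trans hTS) hUV
    (fun Y hY => hpos Y (Finset.mem_of_mem_erase hY)) ((Finset.erase_nonempty hX).2 hT)
  obtain ⟨hYX, hYT⟩ := Finset.mem_erase.1 hY
  exact ⟨X, hX, Y, hYT, hfirst Y hYT hYX,
    fun Z hZ hZX => hsecond Z (Finset.mem_erase.2 ⟨hZX, hZ⟩)⟩

end AngularOrder

/-! ### Hull edges -/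

/-- `PQ` is an edge of the convex hull of `S`, oriented counterclockwise and with no further point
of `S` on its line: every other point of `S` lies strictly to the left of the line from `P`
to `Q`. -/
structure IsHullEdge (S : Finset Pt) (P Q : Pt) : Prop where
  left_mem : P ∈ S
  right_mem : Q ∈ S
  ne : P ≠ Q
  pos : ∀ X ∈ S, X ≠ P → X ≠ Q → 0 < sideOf P Q X

/-- The line from `A` to `B` strictly separates `C`, on its right, from `D`, on its left. -/
def Separates (A B C D : Pt) : Prop :=
  sideOf A B C < 0 ∧ 0 < sideOf A B D

namespace IsHullEdge

variable {S : Finset Pt} {A A' B C D P Q R X : Pt}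

lemma nonneg (h : IsHullEdge S P Q) (hX : X ∈ S) : 0 ≤ sideOf P Q X := by
  rcases eq_or_ne X P with rfl | hXP
  · rw [sideOf_self_left]
  rcases eq_or_ne X Q with rfl | hXQ
  · rw [sideOf_self_right]
  exact (h.pos X hX hXP hXQ).le

lemma pos_of_mem_interior (h : IsHullEdge S P Q)
    (hB : B ∈ interior (convexHull ℝ (S : Set Pt))) : 0 < sideOf P Q B := by
  obtain ⟨X, hX, hlt⟩ := exists_sideOf_lt_of_mem_interior_convexHull hB h.ne
  exact (h.nonneg hX).trans_lt hlt

lemma left_mem_frontier (h : IsHullEdge S P Q) :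
    P ∈ frontier (convexHull ℝ (S : Set Pt)) := by
  refine ⟨subset_closure (subset_convexHull ℝ _ h.left_mem), fun hP => ?_⟩
  exact (h.pos_of_mem_interior hP).ne' (sideOf_self_left P Q)

lemma right_unique (hPQ : IsHullEdge S P Q) (hPR : IsHullEdge S P R) : Q = R := by
  by_contra hne
  have hR := hPQ.pos R hPR.right_mem hPR.ne.symm (Ne.symm hne)
  have hQ := hPR.pos Q hPQ.right_mem hPQ.ne.symm hne
  rw [sideOf_swap_right] at hQ
  linarith

lemma of_erase (h : IsHullEdge (S.erase B) P Q) (hB : 0 < sideOf P Q B) : IsHullEdge S P Q where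
  left_mem := Finset.mem_of_mem_erase h.left_mem
  right_mem := Finset.mem_of_mem_erase h.right_mem
  ne := h.ne
  pos X hX hXP hXQ := by
    rcases eq_or_ne X B with rfl | hXB
    · exact hB
    · exact h.pos X (Finset.mem_erase.2 ⟨hXB, hX⟩) hXP hXQ

lemma of_erase_of_mem_interior (h : IsHullEdge (S.erase B) P Q)
    (hB : B ∈ interior (convexHull ℝ (S : Set Pt))) : IsHullEdge S P Q := by
  obtain ⟨X, hX, hlt⟩ := exists_sideOf_lt_of_mem_interior_convexHull hB h.ne
  have hXB : X ≠ B := by rintro rfl; exact hlt.false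
  exact h.of_erase ((h.nonneg (Finset.mem_erase.2 ⟨hXB, hX⟩)).trans_lt hlt)

lemma sdiff_pos (h : IsHullEdge S P Q) : ∀ X ∈ S \ {P, Q}, 0 < sideOf P Q X := by
  intro X hX
  simp only [Finset.mem_sdiff, Finset.mem_insert, Finset.mem_singleton, not_or] at hX
  exact h.pos X hX.1 hX.2.1 hX.2.2

lemma sdiff_nonempty_of_mem_interior (h : IsHullEdge S P Q) (hBS : B ∈ S)
    (hB : B ∈ interior (convexHull ℝ (S : Set Pt))) : (S \ {P, Q}).Nonempty := by
  obtain ⟨hBP, hBQ, -⟩ := ne_of_sideOf_ne_zero (h.pos_of_mem_interior hB).ne'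
  exact ⟨B, by simp [hBS, hBP, hBQ]⟩

lemma exists_next (h : IsHullEdge S P Q) (hS : GeneralPosition S) (hne : (S \ {P, Q}).Nonempty) :
    ∃ R, IsHullEdge S Q R := by
  obtain ⟨R, hR, hfirst⟩ := hS.exists_angularly_first h.right_mem Finset.sdiff_subset
    (sideOf_self_right P Q) h.sdiff_pos hne
  have hRpos := h.sdiff_pos R hR
  simp only [Finset.mem_sdiff, Finset.mem_insert, Finset.mem_singleton, not_or] at hR hfirst
  refine ⟨R, h.right_mem, hR.1, Ne.symm hR.2.2, fun X hX hXQ hXR => ?_⟩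
  rcases eq_or_ne X P with rfl | hXP
  · rwa [sideOf_rotate]
  · exact hfirst X ⟨hX, hXP, hXQ⟩ hXR

lemma exists_prev (h : IsHullEdge S P Q) (hS : GeneralPosition S) (hne : (S \ {P, Q}).Nonempty) :
    ∃ R, IsHullEdge S R P := by
  obtain ⟨R, hR, hlast⟩ := hS.exists_angularly_last h.left_mem Finset.sdiff_subset
    (sideOf_self_left P Q) h.sdiff_pos hne
  have hRpos := h.sdiff_pos R hR
  simp only [Finset.mem_sdiff, Finset.mem_insert, Finset.mem_singleton, not_or] at hR hlast
  refine ⟨R, hR.1, h.left_mem, hR.2.1, fun X hX hXR hXP => ?_⟩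
  rw [← sideOf_rotate]
  rcases eq_or_ne X Q with rfl | hXQ
  · exact hRpos
  · exact hlast X ⟨hX, hXP, hXQ⟩ hXR

lemma pos_of_separates (hA : IsHullEdge S A A') (hB : 0 < sideOf A A' B) (hC : C ∈ S) (hD : D ∈ S)
    (hsep : Separates A B C D) : 0 < sideOf C D A := by
  obtain ⟨hCneg, hDpos⟩ := hsep
  have hbary := sideOf_mul_sideOf A A' B C D A
  rw [sideOf_self_left, sideOf_swap A B D, sideOf_rotate A B C, ← sideOf_rotate A C D] at hbary
  have hprod : 0 < sideOf A A' B * sideOf C D A := by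
    rcases eq_or_ne C A' with rfl | hCA'
    · have hDC : D ≠ C := by rintro rfl; linarith
      have := hA.pos D hD (ne_of_sideOf_ne_zero hDpos.ne').1 hDC
      linarith [mul_nonneg (hA.nonneg hC) hDpos.le, mul_pos this (neg_pos.2 hCneg)]
    · have := hA.pos C hC (ne_of_sideOf_ne_zero hCneg.ne).1 hCA'
      linarith [mul_pos this hDpos, mul_nonneg (hA.nonneg hD) (neg_pos.2 hCneg).le]
  exact pos_of_mul_pos_right hprod hB.le

lemma nonneg_right_of_pos_left (hA : IsHullEdge S A A') (hB : 0 < sideOf A A' B)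
    (hPQ : IsHullEdge S P Q) (hP : 0 < sideOf A B P) : 0 ≤ sideOf A B Q := by
  by_contra! hQ
  have := hA.pos_of_separates hB hPQ.right_mem hPQ.left_mem ⟨hQ, hP⟩
  rw [sideOf_swap] at this
  linarith [hPQ.nonneg hA.left_mem]

end IsHullEdge

lemma GeneralPosition.exists_isHullEdge {S : Finset Pt} (hS : GeneralPosition S)
    (hcard : S.Nontrivial) : ∃ P Q, IsHullEdge S P Q := by
  obtain ⟨P, hP, hmax⟩ := S.exists_max_image (fun X => X.1 ^ 2 + X.2 ^ 2) hcard.nonempty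
  -- The tangent at `P` to the circle through `P` around the origin supports `S`.
  have htangent : ∀ X ∈ S.erase P, 0 < sideOf P (P.1 - P.2, P.2 + P.1) X := by
    intro X hX
    obtain ⟨hXP, hXS⟩ := Finset.mem_erase.1 hX
    have := sq_sub_add_sq_sub_pos hXP
    simp only [sideOf]
    linarith [hmax X hXS]
  obtain ⟨Q, hQ, hfirst⟩ := hS.exists_angularly_first hP (S.erase_subset P)
    (sideOf_self_left _ _) htangent ((Finset.erase_nonempty hP).2 hcard)
  simp only [Finset.mem_erase] at hQ hfirst
  exact ⟨P, Q, hP, hQ.2, hQ.1.symm, fun X hX hXP => hfirst X ⟨hXP, hX⟩⟩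

/-- If the line `AB` separates `C` from `D`, the point where it meets `CD` is
`AffineMap.lineMap A B (crossingParam A B C D)`. -/
noncomputable def crossingParam (A B C D : Pt) : ℝ :=
  sideOf C D A / (sideOf A B D - sideOf A B C)

lemma Separates.lineMap_crossingParam_mem_segment {A B C D : Pt} (h : Separates A B C D) :
    AffineMap.lineMap A B (crossingParam A B C D) ∈ segment ℝ C D := by
  obtain ⟨hC, hD⟩ := h
  have hden : 0 < sideOf A B D - sideOf A B C := by linarith
  refine ⟨sideOf A B D / (sideOf A B D - sideOf A B C),
    -sideOf A B C / (sideOf A B D - sideOf A B C), by positivity,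
    div_nonneg (by linarith) hden.le, by field_simp; ring, ?_⟩
  ext
  all_goals
    simp only [Prod.fst_add, Prod.snd_add, Prod.smul_fst, Prod.smul_snd, smul_eq_mul,
      crossingParam, AffineMap.lineMap_apply, vsub_eq_sub, vadd_eq_add, Prod.fst_sub, Prod.snd_sub]
    field_simp
    simp only [sideOf]
    ring

lemma Separates.crossingParam_lt_of_right {A B C D X : Pt} (h : Separates A B C D)
    (hX : sideOf A B X < 0) (hCDX : sideOf C D X < 0) :
    crossingParam A B C D < crossingParam A B X D := by
  obtain ⟨hC, hD⟩ := h
  have hdiff : sideOf X D A * (sideOf A B D - sideOf A B C) -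
      sideOf C D A * (sideOf A B D - sideOf A B X) = sideOf A B D * -sideOf C D X := by
    simp only [sideOf]; ring
  rw [crossingParam, crossingParam, div_lt_div_iff₀ (by linarith) (by linarith)]
  linarith [mul_pos hD (neg_pos.2 hCDX)]

lemma Separates.crossingParam_lt_of_left {A B C D X : Pt} (h : Separates A B C D)
    (hX : 0 < sideOf A B X) (hCDX : sideOf C D X < 0) :
    crossingParam A B C D < crossingParam A B C X := by
  obtain ⟨hC, hD⟩ := h
  have hdiff : sideOf C X A * (sideOf A B D - sideOf A B C) -
      sideOf C D A * (sideOf A B X - sideOf A B C) = sideOf A B C * sideOf C D X := by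
    simp only [sideOf]; ring
  rw [crossingParam, crossingParam, div_lt_div_iff₀ (by linarith) (by linarith)]
  linarith [mul_pos_of_neg_of_neg hC hCDX]

-- The edge sought is the one whose crossing point is farthest along the line from `A` to `B`.
lemma GeneralPosition.exists_isHullEdge_separates {T : Finset Pt} {A B : Pt}
    (hT : GeneralPosition T) (hoff : ∀ X ∈ T, sideOf A B X ≠ 0)
    (hright : ∃ X ∈ T, sideOf A B X < 0) (hleft : ∃ X ∈ T, 0 < sideOf A B X) :
    ∃ C D, IsHullEdge T C D ∧ Separates A B C D := by
  let pairs := (T ×ˢ T).filter fun e => Separates A B e.1 e.2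
  have mem_pairs {X Y : Pt} : (X, Y) ∈ pairs ↔ (X ∈ T ∧ Y ∈ T) ∧ Separates A B X Y := by
    simp only [pairs, Finset.mem_filter, Finset.mem_product]
  have hpairs : pairs.Nonempty := by
    obtain ⟨X, hX, hXneg⟩ := hright
    obtain ⟨Y, hY, hYpos⟩ := hleft
    exact ⟨(X, Y), mem_pairs.2 ⟨⟨hX, hY⟩, hXneg, hYpos⟩⟩
  obtain ⟨⟨C, D⟩, hCDpairs, hmax⟩ :=
    pairs.exists_max_image (fun e => crossingParam A B e.1 e.2) hpairs
  obtain ⟨⟨hC, hD⟩, hsep⟩ := mem_pairs.1 hCDpairs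
  have hCD : C ≠ D := by rintro rfl; exact hsep.1.not_gt hsep.2
  refine ⟨C, D, ⟨hC, hD, hCD, fun X hX hXC hXD => ?_⟩, hsep⟩
  refine lt_of_le_of_ne ?_ (hT.sideOf_ne_zero hC hD hX hCD hXC.symm hXD.symm).symm
  by_contra! hXneg
  rcases (hoff X hX).lt_or_gt with hXright | hXleft
  · exact (hsep.crossingParam_lt_of_right hXright hXneg).not_ge
      (hmax (X, D) (mem_pairs.2 ⟨⟨hX, hD⟩, hXright, hsep.2⟩))
  · exact (hsep.crossingParam_lt_of_left hXleft hXneg).not_ge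
      (hmax (C, X) (mem_pairs.2 ⟨⟨hC, hX⟩, hsep.1, hXleft⟩))

lemma IsHullEdge.exists_isHullEdge_erase_separates {S T : Finset Pt} {A A' B : Pt}
    (hA : IsHullEdge S A A') (hS : GeneralPosition S) (hTS : T ⊆ S) (hBS : B ∈ S)
    (hB : 0 < sideOf A A' B) (hright : ∃ X ∈ T, sideOf A B X < 0)
    (hleft : ∃ X ∈ T, 0 < sideOf A B X) :
    ∃ C D, IsHullEdge (T.erase B) C D ∧ Separates A B C D := by
  have hAB : A ≠ B := (ne_of_sideOf_ne_zero hB.ne').1.symm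
  have hsub : (T.erase B).erase A ⊆ S :=
    (Finset.erase_subset _ _).trans ((Finset.erase_subset _ _).trans hTS)
  have hoff : ∀ X ∈ (T.erase B).erase A, sideOf A B X ≠ 0 := by
    intro X hX
    have hXS := hsub hX
    simp only [Finset.mem_erase] at hX
    exact hS.sideOf_ne_zero hA.left_mem hBS hXS hAB hX.1.symm hX.2.1.symm
  have hmem {X : Pt} (hX : X ∈ T) (hne : sideOf A B X ≠ 0) : X ∈ (T.erase B).erase A := by
    obtain ⟨hXA, hXB, -⟩ := ne_of_sideOf_ne_zero hne
    simp [hX, hXA, hXB]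
  obtain ⟨X, hX, hXneg⟩ := hright
  obtain ⟨Y, hY, hYpos⟩ := hleft
  obtain ⟨C, D, hCD, hsep⟩ := (hS.mono hsub).exists_isHullEdge_separates hoff
    ⟨X, hmem hX hXneg.ne, hXneg⟩ ⟨Y, hmem hY hYpos.ne', hYpos⟩
  exact ⟨C, D, hCD.of_erase
    (hA.pos_of_separates hB (hsub hCD.left_mem) (hsub hCD.right_mem) hsep), hsep⟩

lemma IsHullEdge.exists_isHullEdge_separates {S : Finset Pt} {A A' B : Pt}
    (hA : IsHullEdge S A A') (hS : GeneralPosition S) (hBS : B ∈ S)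
    (hB : B ∈ interior (convexHull ℝ (S : Set Pt))) :
    ∃ C D, IsHullEdge S C D ∧ Separates A B C D := by
  have hBpos := hA.pos_of_mem_interior hB
  have hAB : A ≠ B := (ne_of_sideOf_ne_zero hBpos.ne').1.symm
  obtain ⟨X, hX, hXlt⟩ := exists_sideOf_lt_of_mem_interior_convexHull hB hAB
  obtain ⟨Y, hY, hYlt⟩ := exists_sideOf_lt_of_mem_interior_convexHull hB hAB.symm
  rw [sideOf_self_right] at hXlt
  rw [sideOf_self_left, sideOf_swap, neg_neg_iff_pos] at hYlt
  obtain ⟨C, D, hCD, hsep⟩ := hA.exists_isHullEdge_erase_separates hS subset_rfl hBS hBpos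
    ⟨X, hX, hXlt⟩ ⟨Y, hY, hYlt⟩
  exact ⟨C, D, hCD.of_erase_of_mem_interior hB, hsep⟩

/-! ### Non-crossing matchings -/

lemma seg_subset_convexHull {e : Sym2 Pt} {s : Set Pt} (h : ∀ p ∈ e, p ∈ s) :
    seg e ⊆ convexHull ℝ s := by
  induction e with
  | _ a b => exact segment_subset_convexHull (h a (by simp)) (h b (by simp))

lemma isNCMatching_empty : IsNCMatching ∅ ∅ := by
  simp [IsNCMatching]

lemma isNCMatching_pair {C D : Pt} (h : C ≠ D) : IsNCMatching {C, D} {s(C, D)} := by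
  refine ⟨by simpa using h, by simp, fun p hp => ⟨s(C, D), by simpa using hp, ?_⟩, ?_⟩
  · rintro f ⟨hf, -⟩
    exact Finset.mem_singleton.1 hf
  · intro e he f hf hef
    exact absurd ((Finset.mem_singleton.1 he).trans (Finset.mem_singleton.1 hf).symm) hef

lemma IsNCMatching.existsUnique_mem_union {S T : Finset Pt} {M N : Finset (Sym2 Pt)}
    (hM : IsNCMatching S M) (hN : IsNCMatching T N) (hST : Disjoint S T) {p : Pt} (hp : p ∈ S) :
    ∃! e, e ∈ M ∪ N ∧ p ∈ e := by
  obtain ⟨e, ⟨he, hpe⟩, hunique⟩ := hM.2.2.1 p hp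
  refine ⟨e, ⟨Finset.mem_union_left _ he, hpe⟩, ?_⟩
  rintro f ⟨hf, hpf⟩
  rcases Finset.mem_union.1 hf with hfM | hfN
  · exact hunique f ⟨hfM, hpf⟩
  · exact absurd (hN.2.1 f hfN p hpf) (Finset.disjoint_left.1 hST hp)

lemma IsNCMatching.union {S T : Finset Pt} {M N : Finset (Sym2 Pt)} (hM : IsNCMatching S M)
    (hN : IsNCMatching T N)
    (hdisj : Disjoint (convexHull ℝ (S : Set Pt)) (convexHull ℝ (T : Set Pt))) :
    IsNCMatching (S ∪ T) (M ∪ N) := by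
  have hST : Disjoint S T := Finset.disjoint_coe.1
    (hdisj.mono (subset_convexHull ℝ _) (subset_convexHull ℝ _))
  have hseg : ∀ e ∈ M, ∀ f ∈ N, Disjoint (seg e) (seg f) := fun e he f hf =>
    hdisj.mono (seg_subset_convexHull (hM.2.1 e he)) (seg_subset_convexHull (hN.2.1 f hf))
  refine ⟨?_, ?_, ?_, ?_⟩
  · intro e he
    exact (Finset.mem_union.1 he).elim (hM.1 e) (hN.1 e)
  · intro e he p hp
    exact Finset.mem_union.2 ((Finset.mem_union.1 he).imp (hM.2.1 e · p hp) (hN.2.1 e · p hp))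
  · intro p hp
    rcases Finset.mem_union.1 hp with hpS | hpT
    · exact hM.existsUnique_mem_union hN hST hpS
    · rw [Finset.union_comm]
      exact hN.existsUnique_mem_union hM hST.symm hpT
  · intro e he f hf hef
    rcases Finset.mem_union.1 he with heM | heN <;> rcases Finset.mem_union.1 hf with hfM | hfN
    · exact hM.2.2.2 e heM f hfM hef
    · exact hseg e heM f hfN
    · exact (hseg f hfM e heN).symm
    · exact hN.2.2.2 e heN f hfN hef

lemma sideOf_nonpos_of_mem_pair {A B X : Pt} (hX : X ∈ ({A, B} : Finset Pt)) :
    sideOf A B X ≤ 0 := by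
  rcases Finset.mem_insert.1 hX with rfl | hX
  · exact (sideOf_self_left _ _).le
  · rw [Finset.mem_singleton.1 hX, sideOf_self_right]

lemma IsHullEdge.isNCMatching_insert {S : Finset Pt} {M : Finset (Sym2 Pt)} {C D : Pt}
    (h : IsHullEdge S C D) (hM : IsNCMatching (S \ {C, D}) M) :
    IsNCMatching S (insert s(C, D) M) := by
  have hunion := (isNCMatching_pair h.ne).union hM
    (disjoint_convexHull_of_sideOf (fun _ => sideOf_nonpos_of_mem_pair) h.sdiff_pos)
  rwa [Finset.union_sdiff_of_subset (by simp [Finset.insert_subset_iff, h.left_mem, h.right_mem]),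
    ← Finset.insert_eq] at hunion

lemma card_sdiff_pair {S : Finset Pt} {C D : Pt} (hC : C ∈ S) (hD : D ∈ S) (hCD : C ≠ D) :
    (S \ {C, D}).card + 2 = S.card := by
  rw [← Finset.card_pair hCD]
  exact Finset.card_sdiff_add_card_eq_card (by simp [Finset.insert_subset_iff, hC, hD])

lemma IsHullEdge.even_card_sdiff {S : Finset Pt} {C D : Pt} (h : IsHullEdge S C D)
    (hS : Even S.card) : Even (S \ {C, D}).card := by
  rw [← card_sdiff_pair h.left_mem h.right_mem h.ne] at hS
  simpa [Nat.even_add] using hS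

lemma GeneralPosition.exists_isNCMatching {S : Finset Pt} (hS : GeneralPosition S)
    (heven : Even S.card) : ∃ M, IsNCMatching S M := by
  induction S using Finset.strongInduction with
  | H S ih =>
    rcases S.eq_empty_or_nonempty with rfl | hne
    · exact ⟨∅, isNCMatching_empty⟩
    have hcard : 1 < S.card := by
      have := hne.card_pos
      obtain ⟨k, hk⟩ := heven
      omega
    obtain ⟨C, D, hCD⟩ := hS.exists_isHullEdge (Finset.one_lt_card_iff_nontrivial.1 hcard)
    obtain ⟨M, hM⟩ := ih (S \ {C, D})
      (Finset.sdiff_ssubset (by simp [Finset.insert_subset_iff, hCD.left_mem, hCD.right_mem])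
        (by simp))
      (hS.mono Finset.sdiff_subset) (hCD.even_card_sdiff heven)
    exact ⟨_, hCD.isNCMatching_insert hM⟩

/-- The points of `S` strictly to the left of the line from `A` to `B`; those strictly to its right
are `leftPts S B A`. -/
noncomputable def leftPts (S : Finset Pt) (A B : Pt) : Finset Pt :=
  S.filter fun X => 0 < sideOf A B X

lemma mem_leftPts {S : Finset Pt} {A B X : Pt} : X ∈ leftPts S A B ↔ X ∈ S ∧ 0 < sideOf A B X := by
  simp only [leftPts, Finset.mem_filter]

lemma mem_leftPts_swap {S : Finset Pt} {A B X : Pt} :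
    X ∈ leftPts S B A ↔ X ∈ S ∧ sideOf A B X < 0 := by
  rw [mem_leftPts, sideOf_swap, neg_pos]

lemma leftPts_subset (S : Finset Pt) (A B : Pt) : leftPts S A B ⊆ S :=
  Finset.filter_subset _ _

lemma leftPts_swap_eq {S T : Finset Pt} {A B : Pt} (hTS : T ⊆ S)
    (hT : ∀ X ∈ T, sideOf A B X < 0) (hST : ∀ X ∈ S, X ∉ T → 0 ≤ sideOf A B X) :
    leftPts S B A = T := by
  ext X
  rw [mem_leftPts_swap]
  refine ⟨fun ⟨hXS, hX⟩ => ?_, fun hX => ⟨hTS hX, hT X hX⟩⟩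
  by_contra hXT
  exact hX.not_ge (hST X hXS hXT)

section Split

variable {S : Finset Pt} {A B C D : Pt}

lemma disjoint_convexHull_pair_leftPts (S : Finset Pt) (A B : Pt) :
    Disjoint (convexHull ℝ (({A, B} : Finset Pt) : Set Pt))
      (convexHull ℝ (leftPts S A B : Set Pt)) :=
  disjoint_convexHull_of_sideOf (fun _ => sideOf_nonpos_of_mem_pair)
    fun _ hX => (mem_leftPts.1 hX).2

lemma disjoint_convexHull_pair_union_leftPts (S : Finset Pt) (A B : Pt) :
    Disjoint (convexHull ℝ (({A, B} ∪ leftPts S A B : Finset Pt) : Set Pt))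
      (convexHull ℝ (leftPts S B A : Set Pt)) := by
  refine disjoint_convexHull_of_sideOf (P := B) (Q := A) (fun X hX => ?_)
    fun _ hX => (mem_leftPts.1 hX).2
  rcases Finset.mem_union.1 hX with hX | hX
  · exact sideOf_nonpos_of_mem_pair (Finset.pair_comm A B ▸ hX)
  · rw [sideOf_swap]
    linarith [(mem_leftPts.1 hX).2]

lemma GeneralPosition.pair_union_leftPts_union_leftPts (hS : GeneralPosition S) (hA : A ∈ S)
    (hB : B ∈ S) (hAB : A ≠ B) : {A, B} ∪ leftPts S A B ∪ leftPts S B A = S := by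
  ext X
  simp only [Finset.mem_union, Finset.mem_insert, Finset.mem_singleton, mem_leftPts,
    mem_leftPts_swap (A := A) (B := B)]
  constructor
  · rintro (((rfl | rfl) | ⟨hX, -⟩) | ⟨hX, -⟩) <;> assumption
  · intro hX
    by_cases hXA : X = A
    · simp [hXA]
    by_cases hXB : X = B
    · simp [hXB]
    have := (hS.sideOf_ne_zero hA hB hX hAB (Ne.symm hXA) (Ne.symm hXB)).lt_or_gt
    tauto

lemma GeneralPosition.card_eq_add_card_leftPts (hS : GeneralPosition S) (hA : A ∈ S) (hB : B ∈ S)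
    (hAB : A ≠ B) : S.card = 2 + (leftPts S A B).card + (leftPts S B A).card := by
  have hdisj {T U : Finset Pt}
      (h : Disjoint (convexHull ℝ (T : Set Pt)) (convexHull ℝ (U : Set Pt))) : Disjoint T U :=
    Finset.disjoint_coe.1 (h.mono (subset_convexHull ℝ _) (subset_convexHull ℝ _))
  rw [← Finset.card_pair hAB,
    ← Finset.card_union_of_disjoint (hdisj (disjoint_convexHull_pair_leftPts S A B)),
    ← Finset.card_union_of_disjoint (hdisj (disjoint_convexHull_pair_union_leftPts S A B)),
    hS.pair_union_leftPts_union_leftPts hA hB hAB]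

lemma GeneralPosition.even_card_leftPts_of_swap (hS : GeneralPosition S) (heven : Even S.card)
    (hA : A ∈ S) (hB : B ∈ S) (hAB : A ≠ B) (hright : Even (leftPts S B A).card) :
    Even (leftPts S A B).card := by
  rw [hS.card_eq_add_card_leftPts hA hB hAB] at heven
  simpa [Nat.even_add, hright] using heven

lemma GeneralPosition.exists_isNCMatching_mem (hS : GeneralPosition S) (heven : Even S.card)
    (hA : A ∈ S) (hB : B ∈ S) (hAB : A ≠ B) (hright : Even (leftPts S B A).card) :
    ∃ M, IsNCMatching S M ∧ s(A, B) ∈ M := by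
  have hleft := hS.even_card_leftPts_of_swap heven hA hB hAB hright
  obtain ⟨ML, hML⟩ := (hS.mono (leftPts_subset S A B)).exists_isNCMatching hleft
  obtain ⟨MR, hMR⟩ := (hS.mono (leftPts_subset S B A)).exists_isNCMatching hright
  have hM := ((isNCMatching_pair hAB).union hML (disjoint_convexHull_pair_leftPts S A B)).union hMR
    (disjoint_convexHull_pair_union_leftPts S A B)
  rw [hS.pair_union_leftPts_union_leftPts hA hB hAB] at hM
  exact ⟨_, hM, by simp⟩

lemma Separates.mem_sdiff (hsep : Separates A B C D) (hA : A ∈ S) (hB : B ∈ S) :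
    A ∈ S \ {C, D} ∧ B ∈ S \ {C, D} := by
  obtain ⟨hCA, hCB, -⟩ := ne_of_sideOf_ne_zero hsep.1.ne
  obtain ⟨hDA, hDB, -⟩ := ne_of_sideOf_ne_zero hsep.2.ne'
  simp [hA, hB, hCA.symm, hCB.symm, hDA.symm, hDB.symm]

lemma Separates.card_leftPts_sdiff_add_one (hsep : Separates A B C D) (hC : C ∈ S) :
    (leftPts (S \ {C, D}) B A).card + 1 = (leftPts S B A).card := by
  have hCmem : C ∈ leftPts S B A := mem_leftPts_swap.2 ⟨hC, hsep.1⟩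
  rw [← Finset.card_erase_add_one hCmem]
  congr 2
  ext X
  simp only [mem_leftPts_swap, Finset.mem_erase, Finset.mem_sdiff, Finset.mem_insert,
    Finset.mem_singleton, not_or]
  have hXD : sideOf A B X < 0 → X ≠ D := by
    rintro h rfl
    exact h.not_gt hsep.2
  tauto

lemma IsHullEdge.exists_isNCMatching_mem_of_odd (hCD : IsHullEdge S C D) (hS : GeneralPosition S)
    (heven : Even S.card) (hA : A ∈ S) (hB : B ∈ S) (hsep : Separates A B C D)
    (hodd : Odd (leftPts S B A).card) :
    ∃ M, IsNCMatching S M ∧ s(A, B) ∈ M ∧ s(C, D) ∈ M := by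
  obtain ⟨hA', hB'⟩ := hsep.mem_sdiff hA hB
  rw [← hsep.card_leftPts_sdiff_add_one hCD.left_mem, Nat.odd_add_one, Nat.not_odd_iff_even] at hodd
  obtain ⟨M, hM, hAB⟩ := (hS.mono Finset.sdiff_subset).exists_isNCMatching_mem
    (hCD.even_card_sdiff heven) hA' hB' (ne_of_sideOf_ne_zero hsep.1.ne).2.2 hodd
  exact ⟨_, hCD.isNCMatching_insert hM, by simp [hAB], by simp⟩

lemma IsHullEdge.exists_isNCMatching_mem_of_even {C' D' : Pt} (hCD : IsHullEdge S C D)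
    (hCD' : IsHullEdge (S \ {C, D}) C' D') (hS : GeneralPosition S) (heven : Even S.card)
    (hA : A ∈ S) (hB : B ∈ S) (hsep : Separates A B C D) (hsep' : Separates A B C' D')
    (hright : Even (leftPts S B A).card) :
    ∃ M, IsNCMatching S M ∧ s(A, B) ∈ M ∧ s(C, D) ∈ M := by
  obtain ⟨hA', hB'⟩ := hsep.mem_sdiff hA hB
  rw [← hsep.card_leftPts_sdiff_add_one hCD.left_mem, Nat.even_add_one,
    Nat.not_even_iff_odd] at hright
  obtain ⟨M, hM, hAB, -⟩ := hCD'.exists_isNCMatching_mem_of_odd (hS.mono Finset.sdiff_subset)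
    (hCD.even_card_sdiff heven) hA' hB' hsep' hright
  exact ⟨_, hCD.isNCMatching_insert hM, by simp [hAB], by simp⟩

lemma IsNCMatching.hasPiercing {M : Finset (Sym2 Pt)} (hM : IsNCMatching S M) (hAB : s(A, B) ∈ M)
    (hCD : s(C, D) ∈ M) (hA : A ∈ frontier (convexHull ℝ (S : Set Pt)))
    (hsep : Separates A B C D) : HasPiercing S M := by
  have hne : s(A, B) ≠ s(C, D) := by
    intro h
    obtain ⟨hCA, hCB, -⟩ := ne_of_sideOf_ne_zero hsep.1.ne
    have hmem : C ∈ s(A, B) := h ▸ Sym2.mem_mk_left C D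
    exact (Sym2.mem_iff.1 hmem).elim hCA hCB
  exact ⟨A, B, C, D, hAB, hCD, hA, hM.2.2.2 _ hAB _ hCD hne, _,
    AffineMap.lineMap_mem_affineSpan_pair _ _ _, hsep.lineMap_crossingParam_mem_segment⟩

end Split

/-! ### Sets without a piercing matching -/

/-- A potential counterexample: a set of evenly many points in general position none of whose
non-crossing perfect matchings has the piercing property. -/
structure IsPiercingFree (S : Finset Pt) : Prop where
  generalPosition : GeneralPosition S
  even_card : Even S.card
  not_hasPiercing : ∀ M, IsNCMatching S M → ¬ HasPiercing S M

lemma exists_mem_ne_of_even_card {α : Type*} {s : Finset α} (hs : Even s.card) {a : α}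
    (ha : a ∈ s) : ∃ b ∈ s, b ≠ a := by
  have hpos := Finset.card_pos.2 ⟨a, ha⟩
  obtain ⟨k, hk⟩ := hs
  exact s.exists_mem_ne (by omega) a

namespace IsPiercingFree

variable {S : Finset Pt} {A A' B C D C' D' P Q R X : Pt}

lemma even_card_leftPts (h : IsPiercingFree S) (hA : IsHullEdge S A A') (hB : B ∈ S)
    (hCD : IsHullEdge S C D) (hsep : Separates A B C D) : Even (leftPts S B A).card := by
  by_contra hodd
  obtain ⟨M, hM, hABM, hCDM⟩ := hCD.exists_isNCMatching_mem_of_odd h.generalPosition h.even_card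
    hA.left_mem hB hsep (Nat.not_even_iff_odd.1 hodd)
  exact h.not_hasPiercing M hM (hM.hasPiercing hABM hCDM hA.left_mem_frontier hsep)

lemma not_isHullEdge_sdiff (h : IsPiercingFree S) (hA : IsHullEdge S A A') (hB : B ∈ S)
    (hCD : IsHullEdge S C D) (hsep : Separates A B C D) (hsep' : Separates A B C' D') :
    ¬ IsHullEdge (S \ {C, D}) C' D' := by
  intro hCD'
  obtain ⟨M, hM, hABM, hCDM⟩ := hCD.exists_isNCMatching_mem_of_even hCD' h.generalPosition
    h.even_card hA.left_mem hB hsep hsep' (h.even_card_leftPts hA hB hCD hsep)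
  exact h.not_hasPiercing M hM (hM.hasPiercing hABM hCDM hA.left_mem_frontier hsep)

lemma exists_isHullEdge_sdiff_erase_separates (h : IsPiercingFree S) (hA : IsHullEdge S A A')
    (hBS : B ∈ S) (hB : 0 < sideOf A A' B) (hCD : IsHullEdge S C D) (hsep : Separates A B C D) :
    ∃ C' D', IsHullEdge ((S \ {C, D}).erase B) C' D' ∧ Separates A B C' D' := by
  have hright := h.even_card_leftPts hA hBS hCD hsep
  have hleft := h.generalPosition.even_card_leftPts_of_swap h.even_card hA.left_mem hBS
    (ne_of_sideOf_ne_zero hB.ne').1.symm hright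
  obtain ⟨X, hX, hXC⟩ := exists_mem_ne_of_even_card hright
    (mem_leftPts_swap.2 ⟨hCD.left_mem, hsep.1⟩)
  obtain ⟨Y, hY, hYD⟩ := exists_mem_ne_of_even_card hleft (mem_leftPts.2 ⟨hCD.right_mem, hsep.2⟩)
  obtain ⟨hXS, hXneg⟩ := mem_leftPts_swap.1 hX
  obtain ⟨hYS, hYpos⟩ := mem_leftPts.1 hY
  have hXD : X ≠ D := by rintro rfl; exact hXneg.not_gt hsep.2
  have hYC : Y ≠ C := by rintro rfl; exact hYpos.not_gt hsep.1
  exact hA.exists_isHullEdge_erase_separates h.generalPosition Finset.sdiff_subset hBS hB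
    ⟨X, by simp [hXS, hXC, hXD], hXneg⟩ ⟨Y, by simp [hYS, hYC, hYD], hYpos⟩

lemma pos_of_consecutive (h : IsPiercingFree S) (hPQ : IsHullEdge S P Q) (hQR : IsHullEdge S Q R)
    (hPR : P ≠ R) (hX : X ∈ S) (hXP : X ≠ P) (hXQ : X ≠ Q) (hXR : X ≠ R) :
    0 < sideOf P R X := by
  have hRmem : R ∈ S \ {P, Q} := by simp [hQR.right_mem, hPR.symm, hQR.ne.symm]
  obtain ⟨Z, hZ, hfirst⟩ := h.generalPosition.exists_angularly_first hPQ.left_mem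
    Finset.sdiff_subset (sideOf_self_left P Q) hPQ.sdiff_pos ⟨R, hRmem⟩
  suffices hZR : Z = R from hZR ▸ hfirst X (by simp [hX, hXP, hXQ]) (hZR ▸ hXR)
  by_contra hZR
  have hZQ : sideOf P Z Q < 0 := by
    rw [sideOf_swap_right, neg_neg_iff_pos]
    exact hPQ.sdiff_pos Z hZ
  have hright : leftPts S Z P = {Q} := by
    refine leftPts_swap_eq (by simpa using hPQ.right_mem) (by simpa using hZQ) fun Y hY hYQ => ?_
    rcases eq_or_ne Y P with rfl | hYP
    · rw [sideOf_self_left]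
    rcases eq_or_ne Y Z with rfl | hYZ
    · rw [sideOf_self_right]
    rw [Finset.mem_singleton] at hYQ
    exact (hfirst Y (by simp [hY, hYP, hYQ]) hYZ).le
  have heven := h.even_card_leftPts hPQ (Finset.sdiff_subset hZ) hQR
    ⟨hZQ, hfirst R hRmem (Ne.symm hZR)⟩
  simp [hright] at heven

lemma pos_of_consecutive_of_pos (h : IsPiercingFree S) (hPQ : IsHullEdge S P Q)
    (hQR : IsHullEdge S Q R) (hX : X ∈ S) (hXPQ : 0 < sideOf P Q X) (hXQR : 0 < sideOf Q R X) :
    0 < sideOf P R X := by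
  obtain ⟨hXP, hXQ, -⟩ := ne_of_sideOf_ne_zero hXPQ.ne'
  exact h.pos_of_consecutive hPQ hQR (ne_of_sideOf_pos_of_sideOf_pos hXPQ hXQR) hX hXP hXQ
    (ne_of_sideOf_ne_zero hXQR.ne').2.1

end IsPiercingFree

/-- `p` runs counterclockwise along the boundary of the convex hull of `S`, turning around it
infinitely often. -/
def IsHullWalk (S : Finset Pt) (p : ℕ → Pt) : Prop :=
  ∀ i, IsHullEdge S (p i) (p (i + 1))

namespace IsHullWalk

variable {S : Finset Pt} {p : ℕ → Pt} {A A' B Q R X Y : Pt}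

lemma mem (hp : IsHullWalk S p) (i : ℕ) : p i ∈ S :=
  (hp i).left_mem

lemma shift (hp : IsHullWalk S p) (i : ℕ) : IsHullWalk S fun j => p (i + j) :=
  fun j => hp (i + j)

lemma ne_of_mem_interior (hp : IsHullWalk S p) (hB : B ∈ interior (convexHull ℝ (S : Set Pt)))
    (i : ℕ) : B ≠ p i :=
  (ne_of_sideOf_ne_zero ((hp i).pos_of_mem_interior hB).ne').1

lemma sideOf_add_two_pos (hp : IsHullWalk S p) (h : IsPiercingFree S) (hBS : B ∈ S)
    (hB : B ∈ interior (convexHull ℝ (S : Set Pt))) (i : ℕ) :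
    0 < sideOf (p i) (p (i + 2)) B :=
  h.pos_of_consecutive_of_pos (hp i) (hp (i + 1)) hBS ((hp i).pos_of_mem_interior hB)
    ((hp (i + 1)).pos_of_mem_interior hB)

lemma ne_add_two (hp : IsHullWalk S p) (hB : B ∈ interior (convexHull ℝ (S : Set Pt))) (i : ℕ) :
    p i ≠ p (i + 2) :=
  ne_of_sideOf_pos_of_sideOf_pos ((hp i).pos_of_mem_interior hB)
    ((hp (i + 1)).pos_of_mem_interior hB)

lemma ne_add_three (hp : IsHullWalk S p) (h : IsPiercingFree S) (hBS : B ∈ S)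
    (hB : B ∈ interior (convexHull ℝ (S : Set Pt))) (i : ℕ) : p i ≠ p (i + 3) :=
  ne_of_sideOf_pos_of_sideOf_pos (hp.sideOf_add_two_pos h hBS hB i)
    ((hp (i + 2)).pos_of_mem_interior hB)

lemma ne_add_four (hp : IsHullWalk S p) (h : IsPiercingFree S) (hBS : B ∈ S)
    (hB : B ∈ interior (convexHull ℝ (S : Set Pt))) (i : ℕ) : p i ≠ p (i + 4) :=
  ne_of_sideOf_pos_of_sideOf_pos (hp.sideOf_add_two_pos h hBS hB i)
    (hp.sideOf_add_two_pos h hBS hB (i + 2))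

lemma sideOf_of_eq_five (hp : IsHullWalk S p) (h : IsPiercingFree S) (hclosed : p 5 = p 0)
    (hne : ∀ i, p i ≠ p (i + 2)) (hX : X ∈ S) (hXp : ∀ i < 5, X ≠ p i) :
    (sideOf (p 0) X (p 1) < 0 ∧ sideOf (p 0) X (p 2) < 0) ∧
      0 < sideOf (p 0) X (p 3) ∧ 0 < sideOf (p 0) X (p 4) := by
  have hX5 : X ≠ p 5 := hclosed ▸ hXp 0 (by norm_num)
  have h01 := (hp 0).pos X hX (hXp 0 (by norm_num)) (hXp 1 (by norm_num))
  have h02 := h.pos_of_consecutive (hp 0) (hp 1) (hne 0) hX (hXp 0 (by norm_num))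
    (hXp 1 (by norm_num)) (hXp 2 (by norm_num))
  have h35 := h.pos_of_consecutive (hp 3) (hp 4) (hne 3) hX (hXp 3 (by norm_num))
    (hXp 4 (by norm_num)) hX5
  have h45 := (hp 4).pos X hX (hXp 4 (by norm_num)) hX5
  rw [hclosed, ← sideOf_rotate] at h35 h45
  rw [sideOf_swap_right _ (p 1), sideOf_swap_right _ (p 2), neg_neg_iff_pos, neg_neg_iff_pos]
  exact ⟨⟨h01, h02⟩, h35, h45⟩

lemma leftPts_swap_eq_of_eq_five (hp : IsHullWalk S p) (h : IsPiercingFree S) (hclosed : p 5 = p 0)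
    (hne : ∀ i, p i ≠ p (i + 2)) (hX : X ∈ S) (hY : Y ∈ S) (hYp : ∀ i < 5, Y ≠ p i)
    (hXY : 0 < sideOf (p 0) X Y)
    (hrest : ∀ Z ∈ S \ (Finset.range 5).image p, Z ≠ X → Z ≠ Y → 0 < sideOf (p 0) Y Z) :
    leftPts S Y (p 0) = {p 1, p 2, X} := by
  obtain ⟨⟨h1, h2⟩, h3, h4⟩ := hp.sideOf_of_eq_five h hclosed hne hY hYp
  have hYX : sideOf (p 0) Y X < 0 := by rwa [sideOf_swap_right, neg_neg_iff_pos]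
  refine leftPts_swap_eq (by simp [Finset.insert_subset_iff, hp.mem, hX]) (by simp [h1, h2, hYX])
    fun Z hZ hZT => ?_
  simp only [Finset.mem_insert, Finset.mem_singleton, not_or] at hZT
  obtain ⟨hZ1, hZ2, hZX⟩ := hZT
  by_cases hZp : Z ∈ (Finset.range 5).image p
  · obtain ⟨i, hi, rfl⟩ := Finset.mem_image.1 hZp
    rw [Finset.mem_range] at hi
    interval_cases i
    exacts [(sideOf_self_left _ _).ge, absurd rfl hZ1, absurd rfl hZ2, h3.le, h4.le]
  · rcases eq_or_ne Z Y with rfl | hZY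
    · rw [sideOf_self_right]
    · exact (hrest Z (Finset.mem_sdiff.2 ⟨hZ, hZp⟩) hZX hZY).le

lemma ne_five (hp : IsHullWalk S p) (h : IsPiercingFree S) (hQS : Q ∈ S) (hRS : R ∈ S)
    (hQR : Q ≠ R) (hQ : Q ∈ interior (convexHull ℝ (S : Set Pt)))
    (hR : R ∈ interior (convexHull ℝ (S : Set Pt))) : p 0 ≠ p 5 := by
  intro hclosed
  have mem_iff {X : Pt} : X ∈ S \ (Finset.range 5).image p ↔ X ∈ S ∧ ∀ i < 5, X ≠ p i := by
    simp [eq_comm]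
  have hinner : (S \ (Finset.range 5).image p).Nontrivial :=
    ⟨Q, mem_iff.2 ⟨hQS, fun i _ => hp.ne_of_mem_interior hQ i⟩,
      R, mem_iff.2 ⟨hRS, fun i _ => hp.ne_of_mem_interior hR i⟩, hQR⟩
  have hpos : ∀ X ∈ S \ (Finset.range 5).image p, 0 < sideOf (p 0) (p 1) X := by
    intro X hX
    obtain ⟨hXS, hXp⟩ := mem_iff.1 hX
    exact (hp 0).pos X hXS (hXp 0 (by norm_num)) (hXp 1 (by norm_num))
  obtain ⟨X, hX, Y, hY, hXY, hrest⟩ := h.generalPosition.exists_angularly_first_second (hp.mem 0)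
    Finset.sdiff_subset (sideOf_self_left _ _) hpos hinner
  obtain ⟨hXS, hXp⟩ := mem_iff.1 hX
  obtain ⟨hYS, hYp⟩ := mem_iff.1 hY
  have hne := hp.ne_add_two hQ
  obtain ⟨⟨-, h2⟩, h3, -⟩ := hp.sideOf_of_eq_five h hclosed.symm hne hYS hYp
  have heven := h.even_card_leftPts (hp 0) hYS (hp 2) ⟨h2, h3⟩
  rw [hp.leftPts_swap_eq_of_eq_five h hclosed.symm hne hXS hYS hYp hXY hrest,
    Finset.card_eq_three.2 ⟨p 1, p 2, X, (hp 1).ne, (hXp 1 (by norm_num)).symm,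
      (hXp 2 (by norm_num)).symm, rfl⟩] at heven
  exact absurd heven (by decide)

lemma ne_add_five (hp : IsHullWalk S p) (h : IsPiercingFree S) (hQS : Q ∈ S) (hRS : R ∈ S)
    (hQR : Q ≠ R) (hQ : Q ∈ interior (convexHull ℝ (S : Set Pt)))
    (hR : R ∈ interior (convexHull ℝ (S : Set Pt))) (i : ℕ) : p i ≠ p (i + 5) :=
  (hp.shift i).ne_five h hQS hRS hQR hQ hR

lemma sideOf_neg_of_separates (hp : IsHullWalk S p) (h : IsPiercingFree S) (hBS : B ∈ S)
    (hB : B ∈ interior (convexHull ℝ (S : Set Pt))) (hA : IsHullEdge S A A') {i : ℕ}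
    (hsep : Separates A B (p (i + 1)) (p (i + 2))) : sideOf (p i) (p (i + 3)) B < 0 := by
  have hBA := hA.pos_of_mem_interior hB
  have hB₀ := hp.ne_of_mem_interior hB i
  have hB₃ := hp.ne_of_mem_interior hB (i + 3)
  refine lt_of_le_of_ne ?_ (h.generalPosition.sideOf_ne_zero (hp.mem i) (hp.mem (i + 3)) hBS
    (hp.ne_add_three h hBS hB i) hB₀.symm hB₃.symm)
  by_contra! hpos
  obtain ⟨C, D, hCD, hsep'⟩ :=
    h.exists_isHullEdge_sdiff_erase_separates hA hBS hBA (hp (i + 1)) hsep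
  have hsub : (S \ {p (i + 1), p (i + 2)}).erase B ⊆ S :=
    (Finset.erase_subset _ _).trans Finset.sdiff_subset
  have hCDA : 0 < sideOf C D A :=
    hA.pos_of_separates hBA (hsub hCD.left_mem) (hsub hCD.right_mem) hsep'
  have hCD₀ : 0 ≤ sideOf C D (p i) := hCD.nonneg <| by
    simp [hp.mem, hB₀.symm, (hp i).ne, hp.ne_add_two hB i]
  have hCD₃ : 0 ≤ sideOf C D (p (i + 3)) := hCD.nonneg <| by
    simp [hp.mem, hB₃.symm, (hp (i + 2)).ne.symm, (hp.ne_add_two hB (i + 1)).symm]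
  have hAB₀ : sideOf A B (p i) ≤ 0 := by
    by_contra! hcontra
    exact hsep.1.not_ge (hA.nonneg_right_of_pos_left hBA (hp i) hcontra)
  have hAB₃ : 0 ≤ sideOf A B (p (i + 3)) :=
    hA.nonneg_right_of_pos_left hBA (hp (i + 2)) hsep.2
  exact h.not_isHullEdge_sdiff hA hBS (hp (i + 1)) hsep hsep'
    (hCD.of_erase (sideOf_pos_of_mem_triangle hCDA hCD₀ hCD₃ hpos hAB₀ hAB₃))

lemma sideOf_add_three_neg (hp : IsHullWalk S p) (h : IsPiercingFree S) (hBS : B ∈ S)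
    (hB : B ∈ interior (convexHull ℝ (S : Set Pt))) (hA : IsHullEdge S A A')
    (hsep : Separates A B (p 1) (p 2)) (i : ℕ) : sideOf (p i) (p (i + 3)) B < 0 := by
  induction i with
  | zero => exact hp.sideOf_neg_of_separates h hBS hB hA hsep
  | succ i ih =>
    have hsep' : Separates (p i) B (p (i + 2)) (p (i + 3)) := by
      rw [Separates, sideOf_swap_right _ (p (i + 2)), neg_neg_iff_pos,
        sideOf_swap_right _ (p (i + 3)), neg_pos]
      exact ⟨hp.sideOf_add_two_pos h hBS hB i, ih⟩
    exact hp.sideOf_neg_of_separates h hBS hB (hp i) hsep'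

lemma sideOf_succ_pos_of_injOn (hp : IsHullWalk S p) {n i j : ℕ} (hinj : Set.InjOn p (Set.Iic n))
    (hi : i + 1 ≤ n) (hj : j ≤ n) (hji : j ≠ i) (hji' : j ≠ i + 1) :
    0 < sideOf (p i) (p (i + 1)) (p j) :=
  (hp i).pos _ (hp.mem j) (hinj.ne hj (Set.mem_Iic.2 (by lia)) hji) (hinj.ne hj hi hji')

lemma sideOf_add_two_pos_of_injOn (hp : IsHullWalk S p) (h : IsPiercingFree S) {n i j : ℕ}
    (hinj : Set.InjOn p (Set.Iic n)) (hi : i + 2 ≤ n) (hji : j < i) :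
    0 < sideOf (p i) (p (i + 2)) (p j) := by
  have hi₀ : i ∈ Set.Iic n := Set.mem_Iic.2 (by lia)
  have hj : j ∈ Set.Iic n := Set.mem_Iic.2 (by lia)
  have hi₁ : i + 1 ∈ Set.Iic n := Set.mem_Iic.2 (by lia)
  exact h.pos_of_consecutive (hp i) (hp (i + 1)) (hinj.ne hi₀ hi (by lia)) (hp.mem j)
    (hinj.ne hj hi₀ (by lia)) (hinj.ne hj hi₁ (by lia)) (hinj.ne hj hi (by lia))

lemma sideOf_zero_three_six_pos (hp : IsHullWalk S p) (h : IsPiercingFree S)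
    (hinj : Set.InjOn p (Set.Iic 6)) : 0 < sideOf (p 0) (p 3) (p 6) := by
  have h035 : 0 < sideOf (p 0) (p 3) (p 5) := by
    rw [← sideOf_rotate]
    exact hp.sideOf_add_two_pos_of_injOn h hinj (by simp) (by simp)
  have h056 : 0 < sideOf (p 0) (p 5) (p 6) := by
    rw [← sideOf_rotate]
    exact hp.sideOf_succ_pos_of_injOn hinj (by simp) (by simp) (by simp) (by simp)
  have hleft : ∀ j ∈ ({3, 5, 6} : Finset ℕ), 0 < sideOf (p 0) (p 1) (p j) := by
    intro j hj
    simp only [Finset.mem_insert, Finset.mem_singleton] at hj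
    exact hp.sideOf_succ_pos_of_injOn hinj (by simp) (by lia) (by lia) (by lia)
  exact sideOf_trans (sideOf_self_left _ _) (hleft 3 (by simp)) (hleft 5 (by simp))
    (hleft 6 (by simp)) h035 h056

lemma injOn_of_two_mem_interior (hp : IsHullWalk S p) (h : IsPiercingFree S) (hQS : Q ∈ S)
    (hRS : R ∈ S) (hQR : Q ≠ R) (hQ : Q ∈ interior (convexHull ℝ (S : Set Pt)))
    (hR : R ∈ interior (convexHull ℝ (S : Set Pt))) (h06 : p 0 ≠ p 6) :
    Set.InjOn p (Set.Iic 6) := by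
  have hne : ∀ i j, i < j → j ≤ 6 → p i ≠ p j := by
    intro i j hij hj
    obtain ⟨d, rfl⟩ := Nat.exists_eq_add_of_lt hij
    have hd : d ≤ 5 := by lia
    interval_cases d
    · exact (hp i).ne
    · exact hp.ne_add_two hQ i
    · exact hp.ne_add_three h hQS hQ i
    · exact hp.ne_add_four h hQS hQ i
    · exact hp.ne_add_five h hQS hRS hQR hQ hR i
    · obtain rfl : i = 0 := by lia
      exact h06
  intro i hi j hj hij
  by_contra hne'
  rcases lt_or_gt_of_ne hne' with hlt | hlt
  · exact hne i j hlt hj hij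
  · exact hne j i hlt hi hij.symm

lemma not_separates_of_two_mem_interior (hp : IsHullWalk S p) (h : IsPiercingFree S) (hQS : Q ∈ S)
    (hRS : R ∈ S) (hQR : Q ≠ R) (hQ : Q ∈ interior (convexHull ℝ (S : Set Pt)))
    (hR : R ∈ interior (convexHull ℝ (S : Set Pt))) (hA : IsHullEdge S A A') :
    ¬ Separates A Q (p 1) (p 2) := by
  intro hsep
  have h03 : 0 < sideOf (p 3) (p 0) Q := by
    rw [sideOf_swap, neg_pos]
    exact hp.sideOf_add_three_neg h hQS hQ hA hsep 0
  have h36 : 0 < sideOf (p 6) (p 3) Q := by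
    rw [sideOf_swap, neg_pos]
    exact hp.sideOf_add_three_neg h hQS hQ hA hsep 3
  have hinj := hp.injOn_of_two_mem_interior h hQS hRS hQR hQ hR
    (ne_of_sideOf_pos_of_sideOf_pos h36 h03).symm
  have h360 := hp.sideOf_zero_three_six_pos h hinj
  rw [← sideOf_rotate] at h360 h36
  have h3Q0 : 0 < sideOf (p 3) Q (p 0) :=
    sideOf_trans (sideOf_self_left _ (p 4)) ((hp 3).pos_of_mem_interior hQ)
      (hp.sideOf_succ_pos_of_injOn hinj (by simp) (by simp) (by simp) (by simp))
      (hp.sideOf_succ_pos_of_injOn hinj (by simp) (by simp) (by simp) (by simp)) h36 h360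
  rw [sideOf_swap_right] at h3Q0
  linarith

end IsHullWalk

lemma IsHullEdge.exists_isHullWalk {S : Finset Pt} {B P Q R : Pt} (hPQ : IsHullEdge S P Q)
    (hQR : IsHullEdge S Q R) (hS : GeneralPosition S) (hBS : B ∈ S)
    (hB : B ∈ interior (convexHull ℝ (S : Set Pt))) :
    ∃ p, IsHullWalk S p ∧ p 1 = Q ∧ p 2 = R := by
  have hnext (e : {e : Pt × Pt // IsHullEdge S e.1 e.2}) : ∃ T, IsHullEdge S e.1.2 T :=
    e.2.exists_next hS (e.2.sdiff_nonempty_of_mem_interior hBS hB)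
  choose next hnext using hnext
  let advance (e : {e : Pt × Pt // IsHullEdge S e.1 e.2}) : {e : Pt × Pt // IsHullEdge S e.1 e.2} :=
    ⟨(e.1.2, next e), hnext e⟩
  let p (i : ℕ) : Pt := (advance^[i] ⟨(P, Q), hPQ⟩).1.1
  have hp : IsHullWalk S p := by
    intro i
    simp only [p, Function.iterate_succ_apply']
    exact (advance^[i] ⟨(P, Q), hPQ⟩).2
  exact ⟨p, hp, rfl, (hp 1).right_unique hQR⟩

/-- If a set `S` of `2k` points in general position has at least
two points interior to its convex hull, then `S` has a non-crossing perfect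
matching with the piercing property. -/
theorem piercing_matching_of_two_interior_points (k : ℕ) (S : Finset Pt)
    (hcard : S.card = 2 * k) (hgp : GeneralPosition S) (Q R : Pt)
    (hQS : Q ∈ S) (hRS : R ∈ S) (hQR : Q ≠ R)
    (hQ : Q ∈ interior (convexHull ℝ (S : Set Pt)))
    (hR : R ∈ interior (convexHull ℝ (S : Set Pt))) :
    ∃ M : Finset (Sym2 Pt), IsNCMatching S M ∧ HasPiercing S M := by
  by_contra! hfree
  have h : IsPiercingFree S := ⟨hgp, hcard ▸ even_two_mul k, hfree⟩
  obtain ⟨A, A', hA⟩ := hgp.exists_isHullEdge ⟨Q, hQS, R, hRS, hQR⟩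
  obtain ⟨C, D, hCD, hsep⟩ := hA.exists_isHullEdge_separates hgp hQS hQ
  obtain ⟨B, hBC⟩ := hCD.exists_prev hgp (hCD.sdiff_nonempty_of_mem_interior hQS hQ)
  obtain ⟨p, hp, rfl, rfl⟩ := hBC.exists_isHullWalk hCD hgp hQS hQ
  exact hp.not_separates_of_two_mem_interior h hQS hRS hQR hQ hR hA hsep
end

section
/- Let S be a set of 6 points in the plane in general position such that exactly one point Q of S lies in the interior of the convex hull of S, and for every point P of S other than Q, each of the two open half-planes bounded by the line through Q and P contains exactly 2 points of S. Then the number of non-crossing perfect matchings of S is exactly 5 (which equals C_3). -/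
open scoped Classical

/-!
Seen from `Q`, "turn left from `a` to `b`" is a tournament on the other five points, and the
half-plane counts say that it is regular. The regular tournament on five vertices is unique, so the
points can be labelled `v 0, …, v 4` such that `v i` precedes exactly `v (i + 1)` and `v (i + 2)`;
as none of them is interior to the hull, they form a convex pentagon around `Q`. If `Q` is
matched with `v i`, the other four points lie two on each side of the spoke from `Q` to `v i`,
and pairing them as `{v (i + 1), v (i + 2)}`, `{v (i + 3), v (i + 4)}` is the only choice without a
crossing. So there is one matching for each `i`.
-/

/-! ### Orientation of triples of points -/

section Orientation

variable {A B C D Q X : Pt}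

@[simp]
theorem sideOf_self_left_s6 (A B : Pt) : sideOf A A B = 0 := by simp [sideOf]

@[simp]
theorem sideOf_self_right_s6 (A B : Pt) : sideOf A B B = 0 := by simp only [sideOf]; ring

@[simp]
theorem sideOf_self_outer (A B : Pt) : sideOf A B A = 0 := by simp [sideOf]

theorem sideOf_rotate_s6 (A B C : Pt) : sideOf B C A = sideOf A B C := by
  simp only [sideOf]; ring

theorem sideOf_swap_right_s6 (A B C : Pt) : sideOf A C B = -sideOf A B C := by
  simp only [sideOf]; ring

theorem sideOf_eq_add_add (Q A B C : Pt) :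
    sideOf A B C = sideOf Q A B + sideOf Q B C + sideOf Q C A := by
  simp only [sideOf]; ring

theorem sideOf_smul_add_smul (A B C D : Pt) {c d : ℝ} (h : c + d = 1) :
    sideOf A B (c • C + d • D) = c * sideOf A B C + d * sideOf A B D := by
  obtain rfl : c = 1 - d := by linarith
  simp only [sideOf, Prod.fst_add, Prod.snd_add, Prod.smul_fst, Prod.smul_snd, smul_eq_mul]
  ring

theorem sideOf_eq_zero_of_mem_segment (hX : X ∈ segment ℝ A B) : sideOf A B X = 0 := by
  obtain ⟨a, b, -, -, hab, rfl⟩ := hX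
  simp [sideOf_smul_add_smul A B A B hab]

theorem convex_setOf_sideOf_pos (A B : Pt) : Convex ℝ {X | 0 < sideOf A B X} := by
  rw [convex_iff_forall_pos]
  intro C hC D hD c d hc hd hcd
  change 0 < sideOf A B (c • C + d • D)
  rw [sideOf_smul_add_smul A B C D hcd]
  exact add_pos (mul_pos hc hC) (mul_pos hd hD)

theorem isOpen_setOf_sideOf_pos (A B : Pt) : IsOpen {X | 0 < sideOf A B X} :=
  isOpen_lt continuous_const (by unfold sideOf; fun_prop)

theorem disjoint_segment_of_sideOf_pos (hC : 0 < sideOf A B C) (hD : 0 < sideOf A B D) :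
    Disjoint (segment ℝ A B) (segment ℝ C D) := by
  rw [Set.disjoint_left]
  intro X hAB hCD
  have hX : 0 < sideOf A B X := (convex_setOf_sideOf_pos A B).segment_subset hC hD hCD
  exact hX.ne' (sideOf_eq_zero_of_mem_segment hAB)

theorem not_disjoint_diagonals_of_sideOf_pos (hABC : 0 < sideOf A B C) (hBCD : 0 < sideOf B C D)
    (hCDA : 0 < sideOf C D A) (hDAB : 0 < sideOf D A B) :
    ¬ Disjoint (segment ℝ A C) (segment ℝ B D) := by
  -- Each diagonal cuts the area of the quadrilateral into the two triangles used as weights.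
  have area : sideOf C D A + sideOf A B C = sideOf B C D + sideOf D A B := by
    simp only [sideOf]; ring
  have weights : sideOf B C D • A + sideOf D A B • C = sideOf C D A • B + sideOf A B C • D := by
    ext <;> simp [sideOf] <;> ring
  rw [Set.not_disjoint_iff]
  refine ⟨_, mem_segment_iff_div.2 ⟨_, _, hBCD.le, hDAB.le, add_pos hBCD hDAB, rfl⟩,
    mem_segment_iff_div.2 ⟨_, _, hCDA.le, hABC.le, add_pos hCDA hABC, ?_⟩⟩
  simp only [area, div_eq_inv_mul, mul_smul, ← smul_add, weights]

theorem mem_convexHull_of_sideOf_pos (hAB : 0 < sideOf A B X) (hBC : 0 < sideOf B C X)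
    (hCA : 0 < sideOf C A X) : X ∈ convexHull ℝ {A, B, C} := by
  have area : sideOf B C X + sideOf C A X + sideOf A B X ≠ 0 := by positivity
  have barycentric : sideOf B C X • A + sideOf C A X • B + sideOf A B X • C =
      (sideOf B C X + sideOf C A X + sideOf A B X) • X := by
    ext <;> simp [sideOf] <;> ring
  have center := Finset.centerMass_mem_convexHull (s := {A, B, C}) Finset.univ
    (w := ![sideOf B C X, sideOf C A X, sideOf A B X]) (z := ![A, B, C])
    (by simp [Fin.forall_fin_succ, hBC.le, hCA.le, hAB.le])
    (by simp only [Fin.sum_univ_three, Matrix.cons_val]; positivity)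
    (by simp [Fin.forall_fin_succ])
  simpa [Finset.centerMass, Fin.sum_univ_three, barycentric, inv_smul_smul₀ area] using center

theorem mem_interior_convexHull_of_sideOf_pos (hAB : 0 < sideOf A B X) (hBC : 0 < sideOf B C X)
    (hCA : 0 < sideOf C A X) : X ∈ interior (convexHull ℝ {A, B, C}) :=
  mem_interior.2 ⟨{Y | 0 < sideOf A B Y} ∩ {Y | 0 < sideOf B C Y} ∩ {Y | 0 < sideOf C A Y},
    fun _ ⟨⟨hAB, hBC⟩, hCA⟩ => mem_convexHull_of_sideOf_pos hAB hBC hCA,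
    ((isOpen_setOf_sideOf_pos A B).inter (isOpen_setOf_sideOf_pos B C)).inter
      (isOpen_setOf_sideOf_pos C A), ⟨hAB, hBC⟩, hCA⟩

theorem collinear_of_sideOf_eq_zero_s6 (h : sideOf A B C = 0) : Collinear ℝ {A, B, C} := by
  rcases eq_or_ne A B with rfl | hAB
  · simpa using collinear_pair ℝ A C
  have hnorm : (B.1 - A.1) ^ 2 + (B.2 - A.2) ^ 2 ≠ 0 := by
    contrapose! hAB
    ext <;> nlinarith
  -- The parameter of the orthogonal projection of `C` to the line `AB`.
  let t := ((C.1 - A.1) * (B.1 - A.1) + (C.2 - A.2) * (B.2 - A.2)) /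
    ((B.1 - A.1) ^ 2 + (B.2 - A.2) ^ 2)
  have hC : C = t • (B - A) + A := by
    unfold sideOf at h
    ext
    · simp only [Prod.fst_add, Prod.smul_fst, Prod.fst_sub, smul_eq_mul, t]
      field_simp
      linear_combination -(B.2 - A.2) * h
    · simp only [Prod.snd_add, Prod.smul_snd, Prod.snd_sub, smul_eq_mul, t]
      field_simp
      linear_combination (B.1 - A.1) * h
  rw [collinear_iff_of_mem (p₀ := A) (by simp)]
  refine ⟨B - A, ?_⟩
  rintro p (rfl | rfl | rfl)
  · exact ⟨0, by simp⟩
  · exact ⟨1, by simp⟩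
  · exact ⟨t, hC⟩

variable {S : Finset Pt}

theorem GeneralPosition.sideOf_ne_zero_s6 (hS : GeneralPosition S) (hA : A ∈ S) (hB : B ∈ S)
    (hC : C ∈ S) (hAB : A ≠ B) (hAC : A ≠ C) (hBC : B ≠ C) : sideOf A B C ≠ 0 :=
  fun h => hS A hA B hB C hC hAB hAC hBC (collinear_of_sideOf_eq_zero_s6 h)

-- If `A B C` turned right, then `B` would be interior to the triangle `Q A C`.
theorem GeneralPosition.sideOf_pos_of_notMem_interior (hS : GeneralPosition S) (hQ : Q ∈ S)
    (hA : A ∈ S) (hB : B ∈ S) (hC : C ∈ S) (hB' : B ∉ interior (convexHull ℝ (S : Set Pt)))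
    (hQAB : 0 < sideOf Q A B) (hQBC : 0 < sideOf Q B C) : 0 < sideOf A B C := by
  have hAB : A ≠ B := by rintro rfl; simp at hQAB
  have hBC : B ≠ C := by rintro rfl; simp at hQBC
  have hAC : A ≠ C := by rintro rfl; linarith [sideOf_swap_right_s6 Q A B]
  refine lt_of_le_of_ne (not_lt.1 fun hABC => hB' ?_)
    (hS.sideOf_ne_zero_s6 hA hB hC hAB hAC hBC).symm
  have hsub : ({Q, A, C} : Set Pt) ⊆ S := by
    simp [Set.insert_subset_iff, hQ, hA, hC]
  refine interior_mono (convexHull_mono hsub)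
    (mem_interior_convexHull_of_sideOf_pos hQAB ?_ ?_)
  · rwa [sideOf_swap_right_s6, neg_pos]
  · rwa [← sideOf_rotate_s6]

end Orientation

/-! ### Non-crossing matchings -/

theorem mem_seg {p : Pt} {e : Sym2 Pt} (h : p ∈ e) : p ∈ seg e := by
  obtain ⟨q, rfl⟩ := Sym2.mem_iff_exists.1 h
  exact left_mem_segment ℝ p q

namespace IsNCMatching

variable {S : Finset Pt} {M N : Finset (Sym2 Pt)} {p q x y : Pt}

theorem of_pairwiseDisjoint (hdiag : ∀ e ∈ M, ¬ e.IsDiag) (hS : ∀ p, p ∈ S ↔ ∃ e ∈ M, p ∈ e)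
    (hM : (M : Set (Sym2 Pt)).PairwiseDisjoint seg) : IsNCMatching S M := by
  refine ⟨hdiag, fun e he p hp => (hS p).2 ⟨e, he, hp⟩, fun p hp => ?_,
    fun e he f hf hef => hM he hf hef⟩
  obtain ⟨e, he, hpe⟩ := (hS p).1 hp
  exact ⟨e, ⟨he, hpe⟩, fun f ⟨hf, hpf⟩ =>
    hM.elim_set hf he p (mem_seg hpf) (mem_seg hpe)⟩

theorem exists_partner (hM : IsNCMatching S M) (hp : p ∈ S) :
    ∃ q ∈ S, q ≠ p ∧ s(p, q) ∈ M := by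
  obtain ⟨hdiag, hsub, hcover, -⟩ := hM
  obtain ⟨e, ⟨he, hpe⟩, -⟩ := hcover p hp
  obtain ⟨q, rfl⟩ := Sym2.mem_iff_exists.1 hpe
  exact ⟨q, hsub _ he q (Sym2.mem_mk_right p q), Ne.symm (hdiag _ he), he⟩

theorem partner_unique (hM : IsNCMatching S M) (hx : s(p, x) ∈ M) (hy : s(p, y) ∈ M) :
    x = y := by
  obtain ⟨-, hsub, hcover, -⟩ := hM
  have hp : p ∈ S := hsub _ hx p (Sym2.mem_mk_left p x)
  exact Sym2.congr_right.1 ((hcover p hp).unique ⟨hx, Sym2.mem_mk_left p x⟩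
    ⟨hy, Sym2.mem_mk_left p y⟩)

theorem disjoint_segment (hM : IsNCMatching S M) (hpq : s(p, q) ∈ M) (hxy : s(x, y) ∈ M)
    (hne : s(p, q) ≠ s(x, y)) : Disjoint (segment ℝ p q) (segment ℝ x y) :=
  hM.2.2.2 _ hpq _ hxy hne

theorem eq_of_subset (hM : IsNCMatching S M) (hN : IsNCMatching S N) (h : N ⊆ M) : M = N := by
  refine Finset.Subset.antisymm (fun e he => ?_) h
  induction e using Sym2.ind with
  | _ p q =>
    obtain ⟨x, -, -, hx⟩ := hN.exists_partner (hM.2.1 _ he p (Sym2.mem_mk_left p q))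
    rwa [hM.partner_unique he (h hx)]

end IsNCMatching

/-! ### A convex pentagon around a point -/

/-- `v 0, …, v 4` are the vertices, in counterclockwise order, of a convex pentagon, and every
line through `Q` and a vertex `v i` has `v (i + 1)` and `v (i + 2)` strictly on its left (hence the
other two vertices on its right). Indices are taken modulo 5. -/
structure IsPentagonAround (Q : Pt) (v : Fin 5 → Pt) : Prop where
  sideOf_add_one : ∀ i, 0 < sideOf Q (v i) (v (i + 1))
  sideOf_add_two : ∀ i, 0 < sideOf Q (v i) (v (i + 2))
  sideOf_corner : ∀ i, 0 < sideOf (v i) (v (i + 1)) (v (i + 2))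

/-- The matching that joins `Q` to `v i` and pairs off the remaining vertices of the pentagon `v`
along the two sides that are not adjacent to `v i`. -/
noncomputable def spokeMatching (Q : Pt) (v : Fin 5 → Pt) (i : Fin 5) : Finset (Sym2 Pt) :=
  {s(Q, v i), s(v (i + 1), v (i + 2)), s(v (i + 3), v (i + 4))}

namespace IsPentagonAround

variable {Q : Pt} {v : Fin 5 → Pt} {M : Finset (Sym2 Pt)} {i : Fin 5}

theorem sideOf_add_three (h : IsPentagonAround Q v) (i : Fin 5) :
    0 < sideOf Q (v (i + 3)) (v i) := by
  simpa [add_assoc] using h.sideOf_add_two (i + 3)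

theorem sideOf_add_four (h : IsPentagonAround Q v) (i : Fin 5) :
    0 < sideOf Q (v (i + 4)) (v i) := by
  simpa [add_assoc] using h.sideOf_add_one (i + 4)

theorem ne_center (h : IsPentagonAround Q v) (i : Fin 5) : v i ≠ Q := by
  intro hi
  simpa [hi] using h.sideOf_add_one i

theorem injective (h : IsPentagonAround Q v) : Function.Injective v := by
  intro i j hij
  obtain ⟨k, rfl⟩ : ∃ k, j = i + k := ⟨j - i, by simp⟩
  have := h.sideOf_add_one i
  have := h.sideOf_add_two i
  have := h.sideOf_add_three i
  have := h.sideOf_add_four i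
  fin_cases k <;> simp_all

theorem sideOf_side_add_three (h : IsPentagonAround Q v) (i : Fin 5) :
    0 < sideOf (v i) (v (i + 1)) (v (i + 3)) := by
  have h13 : 0 < sideOf Q (v (i + 1)) (v (i + 3)) := by
    simpa [add_assoc] using h.sideOf_add_two (i + 1)
  rw [sideOf_eq_add_add Q]
  exact add_pos (add_pos (h.sideOf_add_one i) h13) (h.sideOf_add_three i)

theorem not_disjoint_spoke (h : IsPentagonAround Q v) (i : Fin 5) :
    ¬ Disjoint (segment ℝ Q (v i)) (segment ℝ (v (i + 4)) (v (i + 1))) := by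
  refine not_disjoint_diagonals_of_sideOf_pos (h.sideOf_add_four i) ?_ ?_ ?_
  · simpa [add_assoc] using h.sideOf_corner (i + 4)
  · rw [sideOf_rotate_s6]
    exact h.sideOf_add_one i
  · rw [← sideOf_rotate_s6]
    simpa [add_assoc] using h.sideOf_add_two (i + 4)

theorem not_disjoint_diagonals (h : IsPentagonAround Q v) (i : Fin 5) :
    ¬ Disjoint (segment ℝ (v i) (v (i + 2))) (segment ℝ (v (i + 1)) (v (i + 3))) := by
  refine not_disjoint_diagonals_of_sideOf_pos (h.sideOf_corner i) ?_ ?_ ?_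
  · simpa [add_assoc] using h.sideOf_corner (i + 1)
  · simpa [add_assoc] using h.sideOf_side_add_three (i + 2)
  · rw [← sideOf_rotate_s6]
    exact h.sideOf_side_add_three i

theorem disjoint_spoke_left (h : IsPentagonAround Q v) (i : Fin 5) :
    Disjoint (seg s(Q, v i)) (seg s(v (i + 1), v (i + 2))) :=
  disjoint_segment_of_sideOf_pos (h.sideOf_add_one i) (h.sideOf_add_two i)

theorem disjoint_spoke_right (h : IsPentagonAround Q v) (i : Fin 5) :
    Disjoint (seg s(Q, v i)) (seg s(v (i + 3), v (i + 4))) := by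
  rw [Sym2.eq_swap]
  refine disjoint_segment_of_sideOf_pos ?_ ?_
  · rw [← sideOf_rotate_s6]
    exact h.sideOf_add_three i
  · rw [← sideOf_rotate_s6]
    exact h.sideOf_add_four i

theorem disjoint_sides (h : IsPentagonAround Q v) (i : Fin 5) :
    Disjoint (seg s(v (i + 1), v (i + 2))) (seg s(v (i + 3), v (i + 4))) := by
  refine disjoint_segment_of_sideOf_pos ?_ ?_
  · simpa [add_assoc] using h.sideOf_corner (i + 1)
  · simpa [add_assoc] using h.sideOf_side_add_three (i + 1)

theorem isNCMatching_spokeMatching (h : IsPentagonAround Q v) (i : Fin 5) :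
    IsNCMatching (insert Q (Finset.univ.image v)) (spokeMatching Q v i) := by
  apply IsNCMatching.of_pairwiseDisjoint
  · simp [spokeMatching, h.injective.eq_iff, (h.ne_center i).symm]
  · intro p
    have hrange : (∃ j, v j = p) ↔ ∃ j, v (i + j) = p := (Equiv.addLeft i).surjective.exists
    simp only [Finset.mem_insert, Finset.mem_image, Finset.mem_univ, true_and, hrange]
    simp [spokeMatching, Fin.exists_fin_succ, eq_comm (b := p), or_assoc]
  · simp [spokeMatching, Set.pairwiseDisjoint_insert, h.disjoint_spoke_left i,
      h.disjoint_spoke_right i, h.disjoint_sides i]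

theorem exists_vertex_partner (h : IsPentagonAround Q v)
    (hM : IsNCMatching (insert Q (Finset.univ.image v)) M) (hi : s(Q, v i) ∈ M) {a : Fin 5}
    (ha : a ≠ 0) : ∃ b, b ≠ 0 ∧ b ≠ a ∧ s(v (i + a), v (i + b)) ∈ M := by
  obtain ⟨q, hq, hqa, hmem⟩ := hM.exists_partner (p := v (i + a)) (by simp)
  obtain rfl | ⟨k, rfl⟩ : q = Q ∨ ∃ k, v k = q := by simpa using hq
  · have hai : i + a = i := h.injective (hM.partner_unique (Sym2.eq_swap ▸ hmem) hi)
    exact absurd (add_eq_left.1 hai) ha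
  obtain ⟨b, rfl⟩ : ∃ b, k = i + b := ⟨k - i, by simp⟩
  refine ⟨b, ?_, ne_of_apply_ne (fun b => v (i + b)) hqa, hmem⟩
  rintro rfl
  rw [add_zero, Sym2.eq_swap] at hmem
  exact h.ne_center _ (hM.partner_unique hmem (Sym2.eq_swap ▸ hi))

theorem left_side_mem (h : IsPentagonAround Q v)
    (hM : IsNCMatching (insert Q (Finset.univ.image v)) M) (hi : s(Q, v i) ∈ M) :
    s(v (i + 1), v (i + 2)) ∈ M := by
  obtain ⟨b, hb0, hb1, hb⟩ := h.exists_vertex_partner hM hi (a := 1) (by decide)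
  obtain rfl | rfl | rfl : b = 2 ∨ b = 3 ∨ b = 4 := by lia
  · exact hb
  · obtain ⟨c, hc0, hc2, hc⟩ := h.exists_vertex_partner hM hi (a := 2) (by decide)
    obtain rfl | rfl | rfl : c = 1 ∨ c = 3 ∨ c = 4 := by lia
    · rwa [Sym2.eq_swap]
    · have h12 := hM.partner_unique (Sym2.eq_swap ▸ hb) (Sym2.eq_swap ▸ hc)
      simp [h.injective.eq_iff] at h12
    · refine absurd (hM.disjoint_segment hb hc (by simp [h.injective.eq_iff])) ?_
      simpa [add_assoc] using h.not_disjoint_diagonals (i + 1)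
  · rw [Sym2.eq_swap] at hb
    exact absurd (hM.disjoint_segment hi hb (by simp [(h.ne_center _).symm]))
      (h.not_disjoint_spoke i)

theorem right_side_mem (h : IsPentagonAround Q v)
    (hM : IsNCMatching (insert Q (Finset.univ.image v)) M) (hi : s(Q, v i) ∈ M) :
    s(v (i + 3), v (i + 4)) ∈ M := by
  have h12 : s(v (i + 1), v (i + 2)) ∈ M := h.left_side_mem hM hi
  obtain ⟨b, hb0, hb3, hb⟩ := h.exists_vertex_partner hM hi (a := 3) (by decide)
  obtain rfl | rfl | rfl : b = 1 ∨ b = 2 ∨ b = 4 := by lia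
  · have h23 := hM.partner_unique h12 (Sym2.eq_swap ▸ hb)
    simp [h.injective.eq_iff] at h23
  · have h13 := hM.partner_unique (Sym2.eq_swap ▸ h12) (Sym2.eq_swap ▸ hb)
    simp [h.injective.eq_iff] at h13
  · exact hb

theorem eq_spokeMatching (h : IsPentagonAround Q v)
    (hM : IsNCMatching (insert Q (Finset.univ.image v)) M) (hi : s(Q, v i) ∈ M) :
    M = spokeMatching Q v i := by
  refine hM.eq_of_subset (h.isNCMatching_spokeMatching i) ?_
  simp [spokeMatching, Finset.insert_subset_iff, hi, h.left_side_mem hM hi,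
    h.right_side_mem hM hi]

theorem spokeMatching_injective (h : IsPentagonAround Q v) :
    Function.Injective (spokeMatching Q v) := by
  intro i j hij
  have hi : s(Q, v i) ∈ spokeMatching Q v j := hij ▸ Finset.mem_insert_self _ _
  have hj : s(Q, v j) ∈ spokeMatching Q v j := Finset.mem_insert_self _ _
  exact h.injective ((h.isNCMatching_spokeMatching j).partner_unique hi hj)

theorem isNCMatching_iff (h : IsPentagonAround Q v) :
    IsNCMatching (insert Q (Finset.univ.image v)) M ↔ M ∈ Set.range (spokeMatching Q v) := by
  constructor
  · intro hM
    obtain ⟨q, hq, hqQ, hQq⟩ := hM.exists_partner (Finset.mem_insert_self Q _)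
    obtain ⟨i, rfl⟩ : ∃ i, v i = q := by simpa [hqQ] using hq
    exact ⟨i, (h.eq_spokeMatching hM hQq).symm⟩
  · rintro ⟨i, rfl⟩
    exact h.isNCMatching_spokeMatching i

theorem pm_eq_five (h : IsPentagonAround Q v) : pm (insert Q (Finset.univ.image v)) = 5 := by
  have hset : {M | IsNCMatching (insert Q (Finset.univ.image v)) M} =
      Set.range (spokeMatching Q v) := Set.ext fun _ => h.isNCMatching_iff
  rw [pm, hset, Set.ncard_range_of_injective h.spokeMatching_injective, Nat.card_fin]

end IsPentagonAround

/-! ### The regular tournament on five vertices -/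

section Tournament

variable {α : Type*} {T : Finset α} {r : α → α → Prop}

theorem and_of_card_filter_eq_two {f : α → Prop} [DecidablePred f] {x y : α}
    (hcard : (T.filter f).card = 2) (h : ∀ p ∈ T, f p → p = x ∨ p = y) : f x ∧ f y := by
  have hsub : T.filter f ⊆ {x, y} := by
    simpa [Finset.subset_iff] using h
  have heq : T.filter f = {x, y} :=
    Finset.eq_of_subset_of_card_le hsub (hcard ▸ Finset.card_le_two)
  have hx : x ∈ T.filter f := by simp [heq]
  have hy : y ∈ T.filter f := by simp [heq]
  exact ⟨(Finset.mem_filter.1 hx).2, (Finset.mem_filter.1 hy).2⟩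

theorem exists_ordered_pair_of_card_filter_eq_two [DecidableEq α] {f : α → Prop} [DecidablePred f]
    (htotal : ∀ a ∈ T, ∀ b ∈ T, a ≠ b → r a b ∨ r b a) (hcard : (T.filter f).card = 2) :
    ∃ x y, r x y ∧ T.filter f = {x, y} := by
  obtain ⟨x, y, hxy, heq⟩ := Finset.card_eq_two.1 hcard
  have hx : x ∈ T.filter f := by simp [heq]
  have hy : y ∈ T.filter f := by simp [heq]
  rcases htotal x (Finset.mem_filter.1 hx).1 y (Finset.mem_filter.1 hy).1 hxy with h | h
  · exact ⟨x, y, h, heq⟩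
  · exact ⟨y, x, h, heq.trans (Finset.pair_comm x y)⟩

theorem exists_cyclic_labelling [DecidableEq α] [DecidableRel r] (hT : T.Nonempty)
    (hasymm : ∀ a ∈ T, ∀ b ∈ T, r a b → ¬ r b a)
    (htotal : ∀ a ∈ T, ∀ b ∈ T, a ≠ b → r a b ∨ r b a)
    (hout : ∀ a ∈ T, (T.filter fun b => r a b).card = 2)
    (hin : ∀ a ∈ T, (T.filter fun b => r b a).card = 2) :
    ∃ v : Fin 5 → α, T = Finset.univ.image v ∧ ∀ i, r (v i) (v (i + 1)) ∧ r (v i) (v (i + 2)) := by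
  obtain ⟨a, ha⟩ := hT
  obtain ⟨b, c, hbc, hsucc⟩ := exists_ordered_pair_of_card_filter_eq_two htotal (hout a ha)
  obtain ⟨d, e, hde, hpred⟩ := exists_ordered_pair_of_card_filter_eq_two htotal (hin a ha)
  have hsucc (p : α) : p ∈ T ∧ r a p ↔ p = b ∨ p = c := by
    simpa using Finset.ext_iff.1 hsucc p
  have hpred (p : α) : p ∈ T ∧ r p a ↔ p = d ∨ p = e := by
    simpa using Finset.ext_iff.1 hpred p
  have hmem (p : α) : p ∈ T ↔ p = a ∨ p = b ∨ p = c ∨ p = d ∨ p = e := by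
    grind
  -- `c` precedes none of `a`, `b`, `c`, so its two successors are `d` and `e`; similarly below.
  obtain ⟨hcd, hce⟩ : r c d ∧ r c e := and_of_card_filter_eq_two (hout c (by grind)) (by grind)
  obtain ⟨hea, heb⟩ : r e a ∧ r e b := and_of_card_filter_eq_two (hout e (by grind)) (by grind)
  obtain ⟨hbd, -⟩ : r b d ∧ r c d := and_of_card_filter_eq_two (hin d (by grind)) (by grind)
  refine ⟨![a, b, c, d, e], ?_, ?_⟩
  · ext p
    simp [hmem, Fin.exists_fin_succ, eq_comm]
  · have hab : r a b := ((hsucc b).2 (.inl rfl)).2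
    have hac : r a c := ((hsucc c).2 (.inr rfl)).2
    have hda : r d a := ((hpred d).2 (.inl rfl)).2
    simp [Fin.forall_fin_succ, *]

end Tournament

/-! ### The exceptional order type -/

section Exceptional

variable {S : Finset Pt} {Q : Pt}

theorem ExceptionalAt.exists_regular_labelling (hexc : ExceptionalAt S Q)
    (hgp : GeneralPosition S) (hQ : Q ∈ S) (hne : (S.erase Q).Nonempty) :
    ∃ v : Fin 5 → Pt, S.erase Q = Finset.univ.image v ∧
      ∀ i, 0 < sideOf Q (v i) (v (i + 1)) ∧ 0 < sideOf Q (v i) (v (i + 2)) := by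
  have hfilter : ∀ f : Pt → Prop, ¬ f Q → (S.erase Q).filter f = S.filter f := fun f hf => by
    rw [Finset.filter_erase, Finset.erase_eq_of_notMem (by simp [hf])]
  apply exists_cyclic_labelling (r := fun a b => 0 < sideOf Q a b) hne
  · intro a _ b _ hab
    rw [sideOf_swap_right_s6]
    linarith
  · intro a ha b hb hab
    rw [Finset.mem_erase] at ha hb
    rw [sideOf_swap_right_s6 Q a b, neg_pos, or_comm]
    exact (hgp.sideOf_ne_zero_s6 hQ ha.2 hb.2 ha.1.symm hb.1.symm hab).lt_or_gt
  · intro a ha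
    rw [Finset.mem_erase] at ha
    rw [hfilter _ (by simp)]
    exact (hexc.2 a ha.2 ha.1).1
  · intro a ha
    rw [Finset.mem_erase] at ha
    rw [hfilter _ (by simp)]
    simpa only [sideOf_swap_right_s6 Q a, neg_pos] using (hexc.2 a ha.2 ha.1).2

theorem ExceptionalAt.exists_isPentagonAround (hexc : ExceptionalAt S Q)
    (hgp : GeneralPosition S) (hQ : Q ∈ S) (hne : (S.erase Q).Nonempty) :
    ∃ v, IsPentagonAround Q v ∧ S = insert Q (Finset.univ.image v) := by
  obtain ⟨v, hv, hside⟩ := hexc.exists_regular_labelling hgp hQ hne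
  have hmem (i : Fin 5) : v i ≠ Q ∧ v i ∈ S := Finset.mem_erase.1 (by simp [hv])
  have hextreme (i : Fin 5) : v i ∉ interior (convexHull ℝ (S : Set Pt)) := fun hi =>
    (hmem i).1 (hexc.1.subset ⟨(hmem i).2, hi⟩)
  refine ⟨v, ⟨fun i => (hside i).1, fun i => (hside i).2, fun i => ?_⟩, ?_⟩
  · refine hgp.sideOf_pos_of_notMem_interior hQ (hmem _).2 (hmem _).2 (hmem _).2 (hextreme _)
      (hside i).1 ?_
    simpa [add_assoc] using (hside (i + 1)).1
  · rw [← hv, Finset.insert_erase hQ]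

end Exceptional

/-- A set of six points in general position with the exceptional
order type has exactly `5 = C_3` non-crossing perfect matchings. -/
theorem pm_of_exceptional (S : Finset Pt) (hcard : S.card = 6)
    (hgp : GeneralPosition S) (Q : Pt) (hQ : Q ∈ S)
    (hexc : ExceptionalAt S Q) :
    pm S = 5 := by
  have hne : (S.erase Q).Nonempty := by
    rw [← Finset.card_pos, Finset.card_erase_of_mem hQ]
    omega
  obtain ⟨v, hv, rfl⟩ := hexc.exists_isPentagonAround hgp hQ hne
  exact hv.pm_eq_five
end
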